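/- arXiv:2109.07209 — 2 statements merged into one kernel-verified Lean document; each statement's English description precedes it below -/
import Mathlib

section
/- For all integers n ≥ 0, α ≥ 0, β ≥ 0 and every k ∈ {1, 2, 3, 4, 5, 6}, the number of (4,8)-regular overpartitions satisfies p̄_{4,8}( 5^{2α} · 7^{2β+1} · (16(7n + k) + 14) ) ≡ 0 (mod 64). -/
/-- The number of `(j,k)`-regular overpartitions of `n`: pairs `(λ, μ)` where `λ` is a
partition of some `m ≤ n` into distinct parts, `μ` is a partition of `n - m`, and no part
of `λ` or `μ` is congruent to `j` modulo `k`. -/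
def regularOverpartitions (j k n : ℕ) : ℕ :=
  ∑ m ∈ Finset.range (n + 1),
    ((Nat.Partition.distincts m).filter (fun lam => ∀ i ∈ lam.parts, i % k ≠ j)).card *
    ((Finset.univ : Finset (Nat.Partition (n - m))).filter
      (fun mu => ∀ i ∈ mu.parts, i % k ≠ j)).card

/-!
Write `φ(q) = ∑ q ^ (k ^ 2)` and `ψ(q) = ∑ q ^ (k * (k + 1) / 2)` for Ramanujan's theta functions
and `E(q) = ∏ (1 - q ^ n)`. The generating function of `p̄_{4,8}` is
`φ(-q⁴) / (φ(-q) φ(-q⁸))`. The product formulas for `φ` and `ψ` supplied by Jacobi's triple product,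
together with the 2-dissections of `φ`, `φ²` and `φ⁴`, give
`∑ p̄_{4,8}(8n + 2) qⁿ = 4 (φ(q)⁴ + 16 q ψ(q²)⁴) ψ(q)² / φ(-q)⁷`.
Since `φ(-q)⁸ ≡ 1` modulo 16 and `ψ(q)² φ(-q) = E(q²)³`, the right-hand side is
`4 φ(q)⁴ E(q²)³` modulo 64, so that
`∑ p̄_{4,8}(16n + 2) qⁿ ≡ 4 φ(q)⁴ E(q)³ ≡ 4 (1 + 8 y(q) + 8 y(q²)) E(q)³` modulo 64,
where `φ = 1 + 2y`.
Jacobi's identity `E³ = ∑ (-1)ᵏ (2k + 1) q ^ (k * (k + 1) / 2)` shows that the `n`-th coefficient of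
this series vanishes unless `8n + 1` is of the form `u² + v²` or `u² + 2v²`. For a prime `p ≡ 7`
modulo 8 neither `-1` nor `-2` is a square modulo `p`, so `p` occurs to an even power in every
number represented by one of these forms.
-/

namespace RegularOverpartition

open Finset

section FiniteJacobiTripleProduct

variable {R : Type*} [CommRing R]

/-- The finite product `(q; q)_n = (1 - q) (1 - q ^ 2) ⋯ (1 - q ^ n)`. -/
def qPochhammer (q : R) (n : ℕ) : R := ∏ i ∈ range n, (1 - q ^ (i + 1))

/-- The Gaussian binomial coefficient `[n, k]_q`, defined by its Pascal rule so that it makes sense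
in every commutative ring. -/
def gaussBinom (q : R) : ℕ → ℕ → R
  | _, 0 => 1
  | 0, _ + 1 => 0
  | n + 1, k + 1 => gaussBinom q n k + q ^ (k + 1) * gaussBinom q n (k + 1)

@[simp]
lemma gaussBinom_zero_right (q : R) (n : ℕ) : gaussBinom q n 0 = 1 := by
  cases n <;> rfl

lemma gaussBinom_succ_succ (q : R) (n k : ℕ) :
    gaussBinom q (n + 1) (k + 1) = gaussBinom q n k + q ^ (k + 1) * gaussBinom q n (k + 1) :=
  rfl

lemma gaussBinom_eq_zero_of_lt (q : R) {n k : ℕ} (h : n < k) : gaussBinom q n k = 0 := by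
  induction n generalizing k with
  | zero => obtain ⟨k, rfl⟩ := Nat.exists_eq_add_of_lt h; simp [gaussBinom]
  | succ n ih =>
    obtain ⟨k, rfl⟩ : ∃ j, k = j + 1 := ⟨k - 1, by omega⟩
    rw [gaussBinom_succ_succ, ih (by omega), ih (by omega), mul_zero, add_zero]

lemma one_sub_pow_mul_gaussBinom (q : R) (n k : ℕ) :
    (1 - q ^ (n - k)) * gaussBinom q n k = (1 - q ^ (k + 1)) * gaussBinom q n (k + 1) := by
  induction n generalizing k with
  | zero => simp [gaussBinom_eq_zero_of_lt]
  | succ n ih =>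
    rcases lt_or_ge n k with h | h
    · simp [Nat.sub_eq_zero_of_le (show n + 1 ≤ k by omega),
        gaussBinom_eq_zero_of_lt q (show n + 1 < k + 1 by omega)]
    obtain ⟨d, rfl⟩ := Nat.exists_eq_add_of_le h
    cases k with
    | zero =>
      have h0 := ih 0
      simp only [gaussBinom_succ_succ, gaussBinom_zero_right, Nat.sub_zero, zero_add, pow_one,
        mul_one] at h0 ⊢
      linear_combination q * h0
    | succ k =>
      have hk := ih k
      have hk' := ih (k + 1)
      rw [show k + 1 + d - k = d + 1 by omega] at hk
      rw [show k + 1 + d - (k + 1) = d by omega] at hk'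
      rw [show k + 1 + d + 1 - (k + 1) = d + 1 by omega]
      rw [gaussBinom_succ_succ q _ k, gaussBinom_succ_succ q _ (k + 1)]
      linear_combination hk + q ^ (k + 2) * hk'

lemma gaussBinom_succ_succ' (q : R) (n k : ℕ) :
    gaussBinom q (n + 1) (k + 1) = q ^ (n - k) * gaussBinom q n k + gaussBinom q n (k + 1) := by
  linear_combination gaussBinom_succ_succ q n k + one_sub_pow_mul_gaussBinom q n k

lemma qPochhammer_succ (q : R) (n : ℕ) :
    qPochhammer q (n + 1) = qPochhammer q n * (1 - q ^ (n + 1)) :=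
  prod_range_succ _ n

lemma qPochhammer_mul_qPochhammer_mul_gaussBinom (q : R) (d k : ℕ) :
    qPochhammer q k * qPochhammer q d * gaussBinom q (d + k) k = qPochhammer q (d + k) := by
  induction k generalizing d with
  | zero => simp [qPochhammer]
  | succ k ih =>
    have habs := one_sub_pow_mul_gaussBinom q (d + (k + 1)) k
    rw [show d + (k + 1) - k = d + 1 by omega] at habs
    have hd := ih (d + 1)
    rw [show d + 1 + k = d + (k + 1) by omega, qPochhammer_succ] at hd
    rw [qPochhammer_succ]
    linear_combination hd - qPochhammer q k * qPochhammer q d * habs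

lemma pow_dvd_qPochhammer_sub (q : R) {m n : ℕ} (h : m ≤ n) :
    q ^ (m + 1) ∣ qPochhammer q n - qPochhammer q m := by
  induction n, h using Nat.le_induction with
  | base => simp
  | succ n h ih =>
    rw [qPochhammer_succ, mul_sub, mul_one, sub_right_comm]
    exact ih.sub ((pow_dvd_pow q (by omega)).mul_left _)

lemma isCoprime_pow_qPochhammer (q : R) (m n : ℕ) : IsCoprime (q ^ m) (qPochhammer q n) :=
  IsCoprime.pow_left <| IsCoprime.prod_right fun i _ => ⟨q ^ i, 1, by ring⟩

lemma pow_dvd_qPochhammer_mul_gaussBinom_sub_one (q : R) {m N d k : ℕ}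
    (hN : m ≤ N) (hk : m ≤ k) (hd : m ≤ d) :
    q ^ (m + 1) ∣ qPochhammer q N * gaussBinom q (d + k) k - 1 := by
  refine (isCoprime_pow_qPochhammer q (m + 1) m).dvd_of_dvd_mul_left ?_
  obtain ⟨a, ha⟩ := pow_dvd_qPochhammer_sub q hN
  obtain ⟨b, hb⟩ := pow_dvd_qPochhammer_sub q hk
  obtain ⟨c, hc⟩ := pow_dvd_qPochhammer_sub q hd
  obtain ⟨e, he⟩ := pow_dvd_qPochhammer_sub q (show m ≤ d + k by omega)
  have hG := qPochhammer_mul_qPochhammer_mul_gaussBinom q d k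
  set G := gaussBinom q (d + k) k
  set u := qPochhammer q m
  refine ⟨u * a * G + e - (b * qPochhammer q d + u * c) * G, ?_⟩
  linear_combination (u * G) * ha + he + hG - (qPochhammer q d * G) * hb - u * G * hc

lemma gaussBinom_add_symm (q : R) (m n : ℕ) :
    gaussBinom q (m + n) m = gaussBinom q (m + n) n := by
  induction m generalizing n with
  | zero =>
    induction n with
    | zero => rfl
    | succ n ih =>
      rw [zero_add] at ih
      rw [zero_add, gaussBinom_succ_succ, ← ih, gaussBinom_eq_zero_of_lt q n.lt_succ_self]
      simp
  | succ m ihm =>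
    induction n with
    | zero =>
      have := ihm 0
      rw [add_zero] at this
      rw [add_zero, gaussBinom_succ_succ, this, gaussBinom_eq_zero_of_lt q m.lt_succ_self]
      simp
    | succ n ihn =>
      have h := ihm (n + 1)
      rw [← add_assoc, add_right_comm] at h
      rw [show m + 1 + (n + 1) = m + 1 + n + 1 by omega, gaussBinom_succ_succ,
        gaussBinom_succ_succ', h, ihn, show m + 1 + n - n = m + 1 by omega, add_comm]

lemma gaussBinom_add_two_add_two (q : R) (n k : ℕ) :
    gaussBinom q (n + 2) (k + 2) = q ^ (n - k) * gaussBinom q n k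
      + (1 + q ^ (n + 1)) * gaussBinom q n (k + 1) + q ^ (k + 2) * gaussBinom q n (k + 2) := by
  have hshift : q ^ (k + 2) * (q ^ (n - (k + 1)) * gaussBinom q n (k + 1))
      = q ^ (n + 1) * gaussBinom q n (k + 1) := by
    rcases lt_or_ge n (k + 1) with h | h
    · simp [gaussBinom_eq_zero_of_lt q h]
    · rw [← mul_assoc, ← pow_add, show k + 2 + (n - (k + 1)) = n + 1 by omega]
  rw [gaussBinom_succ_succ, gaussBinom_succ_succ' q n k, gaussBinom_succ_succ' q n (k + 1)]
  linear_combination hshift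

lemma gaussBinom_central_succ (q : R) (n : ℕ) :
    gaussBinom q (2 * n + 2) (n + 1) =
      (1 + q ^ (2 * n + 1)) * gaussBinom q (2 * n) n
        + 2 * q ^ (n + 1) * gaussBinom q (2 * n) (n + 1) := by
  cases n with
  | zero => simp [gaussBinom]
  | succ n =>
    have hsymm := gaussBinom_add_symm q n (n + 2)
    rw [show n + (n + 2) = 2 * (n + 1) by omega] at hsymm
    rw [gaussBinom_add_two_add_two, hsymm, show 2 * (n + 1) - n = n + 2 by omega]
    ring

lemma gaussBinom_central_add_sum_succ (q : R) (n : ℕ) {w : ℕ → R} (hw : w 0 = 2) :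
    gaussBinom q (2 * (n + 1)) (n + 1) +
        ∑ k ∈ range (n + 1), gaussBinom q (2 * (n + 1)) (n + 1 + k + 1) * w (k + 1) =
      (1 + q ^ (2 * n + 1)) *
          (gaussBinom q (2 * n) n + ∑ k ∈ range n, gaussBinom q (2 * n) (n + k + 1) * w (k + 1)) +
        (q ^ n * gaussBinom q (2 * n) n * w 1 + ∑ k ∈ range n, gaussBinom q (2 * n) (n + k + 1) *
          (q ^ (n - (k + 1)) * w (k + 2) + q ^ (n + k + 1) * w k)) := by
  set G : ℕ → R := fun k => gaussBinom q (2 * n) (n + k)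
  have hG₁ : G (n + 1) = 0 := gaussBinom_eq_zero_of_lt q (by omega)
  have hG₂ : G (n + 2) = 0 := gaussBinom_eq_zero_of_lt q (by omega)
  have hcentral : gaussBinom q (2 * (n + 1)) (n + 1) =
      (1 + q ^ (2 * n + 1)) * G 0 + 2 * q ^ (n + 1) * G 1 := gaussBinom_central_succ q n
  have hrec (k : ℕ) : gaussBinom q (2 * (n + 1)) (n + 1 + k + 1) =
      q ^ (n - k) * G k + (1 + q ^ (2 * n + 1)) * G (k + 1) + q ^ (n + k + 2) * G (k + 2) := by
    rw [mul_add_one, show n + 1 + k + 1 = n + k + 2 by omega, gaussBinom_add_two_add_two,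
      show 2 * n - (n + k) = n - k by omega]
    rfl
  have hdown : ∑ k ∈ range (n + 1), q ^ (n - k) * G k * w (k + 1) =
      q ^ n * G 0 * w 1 + ∑ k ∈ range n, G (k + 1) * (q ^ (n - (k + 1)) * w (k + 2)) := by
    rw [sum_range_succ', add_comm, Nat.sub_zero]
    exact congrArg _ (sum_congr rfl fun k _ => by ring)
  have hup : ∑ k ∈ range (n + 1), q ^ (n + k + 2) * G (k + 2) * w (k + 1) =
      ∑ k ∈ range n, G (k + 1) * (q ^ (n + k + 1) * w k) - 2 * q ^ (n + 1) * G 1 := by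
    have hshift := sum_range_succ' (fun k => G (k + 1) * (q ^ (n + k + 1) * w k)) (n + 1)
    rw [sum_range_succ, sum_range_succ, hG₁, hG₂, hw] at hshift
    rw [eq_sub_iff_add_eq, eq_comm]
    convert hshift using 2
    · ring
    · exact sum_congr rfl fun k _ => by ring
    · ring
  have hmid : ∑ k ∈ range (n + 1), (1 + q ^ (2 * n + 1)) * G (k + 1) * w (k + 1) =
      (1 + q ^ (2 * n + 1)) * ∑ k ∈ range n, G (k + 1) * w (k + 1) := by
    rw [sum_range_succ, hG₁, mul_zero, zero_mul, add_zero, mul_sum]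
    exact sum_congr rfl fun k _ => mul_assoc ..
  change _ = (1 + q ^ (2 * n + 1)) * (G 0 + ∑ k ∈ range n, G (k + 1) * w (k + 1)) +
    (q ^ n * G 0 * w 1 + ∑ k ∈ range n, G (k + 1) * (_ + _))
  simp only [hcentral, hrec, add_mul _ _ (w _), mul_add (G _), sum_add_distrib, hdown, hup, hmid]
  ring

/-- The sum of the `k`-th and the `(-k)`-th term `(a * b) ^ (k * (k - 1) / 2) * a ^ k` of the
bilateral series in Jacobi's triple product identity; note the value `2` at `k = 0`. -/
def thetaTerm (a b : R) (k : ℕ) : R := (a * b) ^ k.choose 2 * (a ^ k + b ^ k)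

lemma add_mul_pow_mul_thetaTerm (a b : R) {n k : ℕ} (h : k < n) :
    (a + b) * (a * b) ^ n * thetaTerm a b (k + 1) =
      (a * b) ^ (n - (k + 1)) * thetaTerm a b (k + 2)
        + (a * b) ^ (n + k + 1) * thetaTerm a b k := by
  obtain ⟨d, rfl⟩ := Nat.exists_eq_add_of_lt h
  have h₁ : (k + 1).choose 2 = k + k.choose 2 := by simp [Nat.choose_succ_succ]
  have h₂ : (k + 2).choose 2 = k + 1 + (k + k.choose 2) := by
    rw [Nat.choose_succ_succ, h₁, Nat.choose_one_right]
  simp only [thetaTerm, h₁, h₂, show k + d + 1 - (k + 1) = d by omega]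
  ring

/-- MacMahon's finite form of the triple product. -/
lemma prod_one_add_mul_one_add (a b : R) (n : ℕ) :
    ∏ i ∈ range n, ((1 + a * (a * b) ^ i) * (1 + b * (a * b) ^ i)) =
      gaussBinom (a * b) (2 * n) n +
        ∑ k ∈ range n, gaussBinom (a * b) (2 * n) (n + k + 1) * thetaTerm a b (k + 1) := by
  induction n with
  | zero => simp
  | succ n ih =>
    have hw₀ : thetaTerm a b 0 = 2 := by norm_num [thetaTerm]
    have hw₁ : thetaTerm a b 1 = a + b := by simp [thetaTerm]
    have hcross : (a + b) * (a * b) ^ n *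
          ∑ k ∈ range n, gaussBinom (a * b) (2 * n) (n + k + 1) * thetaTerm a b (k + 1) =
        ∑ k ∈ range n, gaussBinom (a * b) (2 * n) (n + k + 1) *
          ((a * b) ^ (n - (k + 1)) * thetaTerm a b (k + 2) +
            (a * b) ^ (n + k + 1) * thetaTerm a b k) := by
      rw [mul_sum]
      refine sum_congr rfl fun k hk => ?_
      rw [← add_mul_pow_mul_thetaTerm a b (mem_range.1 hk)]
      ring
    rw [gaussBinom_central_add_sum_succ _ _ hw₀, ← hcross, hw₁, prod_range_succ, ih]
    ring

lemma pow_dvd_prod_mul_qPochhammer_sub_sum_thetaTerm (a b : R) (n : ℕ) :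
    (a * b) ^ n ∣
      (∏ i ∈ range n, ((1 + a * (a * b) ^ i) * (1 + b * (a * b) ^ i))) * qPochhammer (a * b) n -
        (1 + ∑ k ∈ range n, thetaTerm a b (k + 1)) := by
  have hcentral : (a * b) ^ n ∣ qPochhammer (a * b) n * gaussBinom (a * b) (2 * n) n - 1 := by
    rw [two_mul]
    exact (pow_dvd_pow _ n.le_succ).trans
      (pow_dvd_qPochhammer_mul_gaussBinom_sub_one _ le_rfl le_rfl le_rfl)
  have hterm : ∀ k ∈ range n, (a * b) ^ n ∣
      (qPochhammer (a * b) n * gaussBinom (a * b) (2 * n) (n + k + 1) - 1) *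
        thetaTerm a b (k + 1) := by
    intro k hk
    have hkn : k < n := mem_range.1 hk
    have hG := pow_dvd_qPochhammer_mul_gaussBinom_sub_one (a * b) (m := n - (k + 1)) (N := n)
      (d := n - (k + 1)) (k := n + k + 1) (by omega) (by omega) le_rfl
    rw [show n - (k + 1) + (n + k + 1) = 2 * n by omega] at hG
    have hk_le : k ≤ (k + 1).choose 2 := by simp [Nat.choose_succ_succ]
    refine (pow_dvd_pow _ (show n ≤ n - (k + 1) + 1 + (k + 1).choose 2 by omega)).trans ?_
    rw [pow_add]
    exact mul_dvd_mul hG (dvd_mul_right _ _)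
  convert hcentral.add (dvd_sum hterm) using 1
  simp only [prod_one_add_mul_one_add, sub_mul, sum_sub_distrib, one_mul, mul_assoc, ← mul_sum]
  ring

lemma sum_neg_one_pow_mul_sub (x : ℕ → R) (n : ℕ) :
    ∑ k ∈ range n, (-1) ^ k * (k + 1) * (x k - x (k + 1)) =
      ∑ k ∈ range n, (-1) ^ k * (2 * k + 1) * x k + (-1) ^ n * n * x n := by
  induction n with
  | zero => simp
  | succ n ih =>
    rw [sum_range_succ, sum_range_succ, ih]
    push_cast
    ring

section DualNumber

open DualNumber TrivSqZeroExt

lemma neg_one_sub_eps_mul (q : R) : -(1 - ε) * (-(1 + ε) * inl q) = (inl q : R[ε]) := by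
  linear_combination (-inl q : R[ε]) * eps_mul_eps (R := R)

lemma snd_thetaTerm (q : R) (k : ℕ) :
    (thetaTerm (-(1 - ε)) (-(1 + ε) * inl q) (k + 1) : R[ε]).snd =
      (-1) ^ k * (k + 1) * (q ^ (k + 1).choose 2 - q ^ (k + 2).choose 2) := by
  have hsub : ((-(1 - ε)) ^ (k + 1) : R[ε]).snd = (-1) ^ k * (k + 1) := by
    simp [TrivSqZeroExt.snd_pow, mul_comm]
  have hadd : ((-(1 + ε)) ^ (k + 1) : R[ε]).snd = -((-1) ^ k * (k + 1)) := by
    simp [TrivSqZeroExt.snd_pow, mul_comm]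
  have hchoose : (k + 2).choose 2 = k + 1 + (k + 1).choose 2 := by
    rw [Nat.choose_succ_succ, Nat.choose_one_right]
  rw [thetaTerm, neg_one_sub_eps_mul, mul_pow, inl_pow, inl_pow, DualNumber.snd_mul, snd_add,
    DualNumber.snd_mul, hsub, hadd, hchoose]
  simp only [fst_inl, snd_inl, zero_mul, mul_zero, zero_add, add_zero]
  ring

lemma snd_prod_mul_qPochhammer (q : R) (n : ℕ) :
    ((∏ i ∈ range (n + 1), ((1 + -(1 - ε) * inl q ^ i) * (1 + -(1 + ε) * inl q * inl q ^ i))) *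
      qPochhammer (inl q) (n + 1) : R[ε]).snd = qPochhammer q n * qPochhammer q (n + 1) ^ 2 := by
  have hfactor : (∏ i ∈ range (n + 1), (1 + -(1 - ε) * inl q ^ i) : R[ε]) =
      ε * ∏ i ∈ range n, (1 + -(1 - ε) * inl q ^ (i + 1)) := by
    rw [prod_range_succ', mul_comm, pow_zero]
    ring
  rw [prod_mul_distrib, hfactor, mul_assoc, mul_assoc, DualNumber.snd_mul, fst_eps, snd_eps,
    zero_mul, zero_add, one_mul, ← fstHom_apply (S := R)]
  simp only [qPochhammer, map_mul, map_prod, fstHom_apply, fst_add, fst_sub, fst_mul,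
    fst_pow, fst_one, fst_eps, fst_inl, add_zero, sub_zero, neg_mul, one_mul, ← sub_eq_add_neg,
    ← pow_succ']
  ring

/-- Jacobi's identity for the cube of Euler's product is the `ε`-part of the triple product with
`a = -(1 - ε)` and `b = -(1 + ε) q`. -/
lemma pow_dvd_qPochhammer_mul_sq_sub_sum (q : R) (n : ℕ) :
    q ^ (n + 1) ∣ qPochhammer q n * qPochhammer q (n + 1) ^ 2 -
      ∑ k ∈ range (n + 1), (-1) ^ k * (2 * k + 1) * q ^ (k + 1).choose 2 := by
  obtain ⟨c, hc⟩ := pow_dvd_prod_mul_qPochhammer_sub_sum_thetaTerm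
    (-(1 - ε)) (-(1 + ε) * inl q : R[ε]) (n + 1)
  have hsnd := congrArg snd hc
  rw [neg_one_sub_eps_mul, snd_sub, snd_prod_mul_qPochhammer, snd_add, snd_one, zero_add, snd_sum,
    sum_congr rfl fun k _ => snd_thetaTerm q k,
    sum_neg_one_pow_mul_sub (fun k => q ^ (k + 1).choose 2), inl_pow, DualNumber.snd_mul, fst_inl,
    snd_inl, zero_mul, add_zero] at hsnd
  obtain ⟨d, hd⟩ : q ^ (n + 1) ∣ q ^ (n + 2).choose 2 :=
    pow_dvd_pow q (by simp [Nat.choose_succ_succ n.succ])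
  refine ⟨c.snd + (-1) ^ (n + 1) * (n + 1 : ℕ) * d, ?_⟩
  linear_combination hsnd + (-1) ^ (n + 1) * (n + 1 : ℕ) * hd

end DualNumber

end FiniteJacobiTripleProduct

section Limits

open PowerSeries Filter Topology
open scoped PowerSeries.WithPiTopology

variable {R : Type*} [CommRing R] [TopologicalSpace R]

lemma eq_of_tendsto_of_X_pow_dvd_sub [T2Space R] {P S : ℕ → R⟦X⟧} {p s : R⟦X⟧}
    (hP : Tendsto P atTop (𝓝 p)) (hS : Tendsto S atTop (𝓝 s)) (h : ∀ n, X ^ n ∣ P n - S n) :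
    p = s := by
  rw [WithPiTopology.tendsto_iff_coeff_tendsto] at hP hS
  ext d
  refine tendsto_nhds_unique_of_eventuallyEq (hP d) (hS d) ?_
  filter_upwards [eventually_gt_atTop d] with n hn
  exact sub_eq_zero.1 ((map_sub _ _ _).symm.trans (X_pow_dvd_iff.1 (h n) d hn))

lemma continuous_expand {d : ℕ} (hd : d ≠ 0) : Continuous (expand d hd : R⟦X⟧ → R⟦X⟧) := by
  refine continuous_iff_continuousAt.2 fun f => ?_
  refine (WithPiTopology.tendsto_iff_coeff_tendsto R _ _ _).2 fun n => ?_
  simp only [coeff_expand]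
  split_ifs
  · exact (WithPiTopology.continuous_coeff R _).continuousAt
  · exact tendsto_const_nhds

lemma hasSum_monomial_comp {e : ℕ → ℕ} (he : Function.Injective e) {f : R⟦X⟧}
    (hf : ∀ n ∉ Set.range e, coeff n f = 0) :
    HasSum (fun k => monomial (e k) (coeff (e k) f)) f :=
  (he.hasSum_iff fun n hn => by rw [hf n hn, map_zero]).2
    (hasSum_of_monomials_self f)

variable [IsTopologicalRing R] [T2Space R]

lemma jacobi_triple_product {a b u v w s : R⟦X⟧} (hab : X ∣ a * b)
    (hu : HasProd (fun i => 1 + a * (a * b) ^ i) u)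
    (hv : HasProd (fun i => 1 + b * (a * b) ^ i) v)
    (hw : HasProd (fun i => 1 - (a * b) ^ (i + 1)) w)
    (hs : HasSum (fun k => thetaTerm a b (k + 1)) s) : u * v * w = 1 + s :=
  eq_of_tendsto_of_X_pow_dvd_sub ((hu.mul hv).tendsto_prod_nat.mul hw.tendsto_prod_nat)
    (hs.tendsto_sum_nat.const_add 1) fun n =>
      (pow_dvd_pow_of_dvd hab n).trans (pow_dvd_prod_mul_qPochhammer_sub_sum_thetaTerm a b n)

end Limits

section Products

open PowerSeries Filter Topology
open scoped PowerSeries.WithPiTopology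

/-- The infinite product `∏ (1 + c q ^ n)` over `n ≥ 1`. -/
noncomputable def eulerProd (c : ℤ) : ℤ⟦X⟧ := ∏' i : ℕ, (1 + C c * X ^ (i + 1))

/-- The infinite product `∏ (1 + c q ^ n)` over odd `n ≥ 1`. -/
noncomputable def oddEulerProd (c : ℤ) : ℤ⟦X⟧ := ∏' i : ℕ, (1 + C c * X ^ (2 * i + 1))

lemma multipliable_one_add_C_mul_X_pow (c : ℤ) {e : ℕ → ℕ} (he : ∀ i, i < e i) :
    Multipliable fun i => 1 + C c * (X : ℤ⟦X⟧) ^ e i := by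
  refine WithPiTopology.multipliable_one_add_of_tendsto_order_atTop_nhds_top ℤ
    (ENat.tendsto_nhds_top_iff_natCast_lt.2 fun n => eventually_atTop.2 ⟨n, fun i hi => ?_⟩)
  have horder : (e i : ℕ∞) ≤ (C c * X ^ e i : ℤ⟦X⟧).order :=
    le_order _ _ fun j hj => by
      rw [coeff_C_mul, coeff_X_pow, if_neg (Nat.cast_lt.1 hj).ne, mul_zero]
  exact lt_of_lt_of_le (mod_cast hi.trans_lt (he i)) horder

lemma hasProd_eulerProd (c : ℤ) : HasProd (fun i => 1 + C c * (X : ℤ⟦X⟧) ^ (i + 1)) (eulerProd c) :=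
  (multipliable_one_add_C_mul_X_pow c fun i => i.lt_succ_self).hasProd

lemma hasProd_oddEulerProd (c : ℤ) :
    HasProd (fun i => 1 + C c * (X : ℤ⟦X⟧) ^ (2 * i + 1)) (oddEulerProd c) :=
  (multipliable_one_add_C_mul_X_pow c fun i => by omega).hasProd

lemma hasProd_expand_eulerProd {d : ℕ} (hd : d ≠ 0) (c : ℤ) :
    HasProd (fun i => 1 + C c * (X : ℤ⟦X⟧) ^ (d * (i + 1))) (expand d hd (eulerProd c)) := by
  simpa [Function.comp_def, pow_mul] using
    (hasProd_eulerProd c).map (expand d hd) (continuous_expand hd)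

lemma hasProd_expand_oddEulerProd {d : ℕ} (hd : d ≠ 0) (c : ℤ) :
    HasProd (fun i => 1 + C c * (X : ℤ⟦X⟧) ^ (d * (2 * i + 1))) (expand d hd (oddEulerProd c)) := by
  simpa [Function.comp_def, pow_mul] using
    (hasProd_oddEulerProd c).map (expand d hd) (continuous_expand hd)

lemma isUnit_eulerProd (c : ℤ) : IsUnit (eulerProd c) := by
  rw [isUnit_iff_constantCoeff, eulerProd, (hasProd_eulerProd c).multipliable.map_tprod _
    (WithPiTopology.continuous_constantCoeff ℤ)]
  simp

lemma eulerProd_one_mul_eulerProd_neg_one :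
    eulerProd 1 * eulerProd (-1) = expand 2 two_ne_zero (eulerProd (-1)) := by
  refine ((hasProd_eulerProd 1).mul (hasProd_eulerProd (-1))).unique ?_
  convert hasProd_expand_eulerProd two_ne_zero (-1) using 2 with i
  simp only [map_one, map_neg]
  ring

lemma oddEulerProd_one_mul_oddEulerProd_neg_one :
    oddEulerProd 1 * oddEulerProd (-1) = expand 2 two_ne_zero (oddEulerProd (-1)) := by
  refine ((hasProd_oddEulerProd 1).mul (hasProd_oddEulerProd (-1))).unique ?_
  convert hasProd_expand_oddEulerProd two_ne_zero (-1) using 2 with i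
  simp only [map_one, map_neg]
  ring

lemma oddEulerProd_mul_expand_eulerProd (c : ℤ) :
    oddEulerProd c * expand 2 two_ne_zero (eulerProd c) = eulerProd c := by
  have heven := hasProd_expand_eulerProd two_ne_zero c
  simp only [mul_add_one] at heven
  exact (HasProd.even_mul_odd (f := fun i => 1 + C c * X ^ (i + 1)) (hasProd_oddEulerProd c)
    heven).unique (hasProd_eulerProd c)

lemma oddEulerProd_neg_one_mul_eulerProd_one : oddEulerProd (-1) * eulerProd 1 = 1 := by
  refine (isUnit_eulerProd (-1)).mul_right_cancel ?_
  rw [mul_assoc, eulerProd_one_mul_eulerProd_neg_one, oddEulerProd_mul_expand_eulerProd, one_mul]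

end Products

section ThetaFunctions

open PowerSeries Filter Topology
open scoped PowerSeries.WithPiTopology

/-- The series `∑ q ^ (k ^ 2)` over `k ≥ 1`. -/
noncomputable def squareSeries : ℤ⟦X⟧ := mk fun n => if n ≠ 0 ∧ IsSquare n then 1 else 0

/-- Ramanujan's theta function `φ(q) = ∑ q ^ (k ^ 2)` over all integers `k`. -/
noncomputable def phi : ℤ⟦X⟧ := 1 + 2 * squareSeries

/-- The series `φ(-q)`, whose inverse is the generating function of all overpartitions. -/
noncomputable def phiNeg : ℤ⟦X⟧ := rescale (-1) phi

/-- Ramanujan's theta function `ψ(q) = ∑ q ^ (k * (k + 1) / 2)` over `k ≥ 0`; the number `n` is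
triangular if and only if `8 * n + 1` is a square. -/
noncomputable def psi : ℤ⟦X⟧ := mk fun n => if IsSquare (8 * n + 1) then 1 else 0

lemma eight_mul_choose_two_add_one (k : ℕ) :
    8 * (k + 1).choose 2 + 1 = (2 * k + 1) * (2 * k + 1) := by
  have h := (k + 1).choose_two_right ▸ Nat.div_two_mul_two_of_even (Nat.even_mul_pred_self (k + 1))
  simp only [Nat.add_sub_cancel] at h ⊢
  nlinarith

lemma injective_choose_two : Function.Injective fun k : ℕ => (k + 1).choose 2 := fun k l h => by
  have hk := eight_mul_choose_two_add_one k
  rw [show (k + 1).choose 2 = (l + 1).choose 2 from h, eight_mul_choose_two_add_one] at hk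
  have := Nat.mul_self_inj.1 hk
  omega

lemma isSquare_eight_mul_add_one_iff {n : ℕ} :
    IsSquare (8 * n + 1) ↔ n ∈ Set.range fun k : ℕ => (k + 1).choose 2 := by
  constructor
  · rintro ⟨r, hr⟩
    obtain ⟨k, rfl⟩ : Odd r := by
      have : Odd (r * r) := hr ▸ ⟨4 * n, by ring⟩
      exact (Nat.odd_mul.1 this).1
    have := eight_mul_choose_two_add_one k
    exact ⟨k, show (k + 1).choose 2 = n by omega⟩
  · rintro ⟨k, rfl⟩
    exact ⟨2 * k + 1, eight_mul_choose_two_add_one k⟩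

lemma hasSum_psi : HasSum (fun k : ℕ => (X : ℤ⟦X⟧) ^ (k + 1).choose 2) psi := by
  convert hasSum_monomial_comp injective_choose_two (f := psi) fun n hn => ?_ using 2 with k
  · rw [psi, coeff_mk, if_pos (isSquare_eight_mul_add_one_iff.2 ⟨k, rfl⟩), X_pow_eq]
  · rw [psi, coeff_mk, if_neg (isSquare_eight_mul_add_one_iff.not.2 hn)]

lemma hasSum_rescale_squareSeries (c : ℤ) :
    HasSum (fun k : ℕ => (C c * (X : ℤ⟦X⟧)) ^ ((k + 1) * (k + 1))) (rescale c squareSeries) := by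
  have hinj : Function.Injective fun k : ℕ => (k + 1) * (k + 1) := fun k l h =>
    Nat.succ_injective (Nat.mul_self_inj.1 h)
  convert hasSum_monomial_comp hinj (f := rescale c squareSeries) fun n hn => ?_ using 2 with k
  · rw [coeff_rescale, squareSeries, coeff_mk, if_pos ⟨by positivity, k + 1, rfl⟩, mul_one, mul_pow,
      ← map_pow, X_pow_eq, ← monomial_zero_eq_C_apply, monomial_mul_monomial, zero_add, mul_one]
  · rw [coeff_rescale, squareSeries, coeff_mk, if_neg, mul_zero]
    rintro ⟨hn₀, r, rfl⟩
    obtain ⟨k, rfl⟩ := Nat.exists_eq_succ_of_ne_zero (left_ne_zero_of_mul hn₀)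
    exact hn ⟨k, rfl⟩

lemma rescale_phi_eq {c : ℤ} (hc : c * c = 1) :
    rescale c phi = oddEulerProd c ^ 2 * expand 2 two_ne_zero (eulerProd (-1)) := by
  have hab : C c * X * (C c * X) = (X ^ 2 : ℤ⟦X⟧) := by
    rw [mul_mul_mul_comm, ← map_mul, hc, map_one, one_mul, sq]
  have hu : HasProd (fun i => 1 + C c * X * (C c * X * (C c * X) : ℤ⟦X⟧) ^ i) (oddEulerProd c) := by
    convert hasProd_oddEulerProd c using 3 with i
    rw [hab]
    ring
  have hw : HasProd (fun i => 1 - (C c * X * (C c * X) : ℤ⟦X⟧) ^ (i + 1))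
      (expand 2 two_ne_zero (eulerProd (-1))) := by
    convert hasProd_expand_eulerProd two_ne_zero (-1) using 2 with i
    rw [hab, map_neg, map_one]
    ring
  have hs : HasSum (fun k => thetaTerm (C c * X : ℤ⟦X⟧) (C c * X) (k + 1))
      (2 * rescale c squareSeries) := by
    have hterm (k : ℕ) : thetaTerm (C c * X : ℤ⟦X⟧) (C c * X) (k + 1) =
        2 * (C c * X) ^ ((k + 1) * (k + 1)) := by
      have hexp : (k + 1) * (k + 1) = 2 * (k + 1).choose 2 + (k + 1) := by
        linarith [eight_mul_choose_two_add_one k]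
      rw [thetaTerm, hexp]
      ring
    simp_rw [hterm]
    exact (hasSum_rescale_squareSeries c).mul_left 2
  rw [phi, map_add, map_one, map_mul, map_ofNat, sq,
    jacobi_triple_product (hab ▸ dvd_pow_self X two_ne_zero) hu hu hw hs]

lemma phi_eq : phi = oddEulerProd 1 ^ 2 * expand 2 two_ne_zero (eulerProd (-1)) := by
  simpa using rescale_phi_eq (mul_one 1)

lemma phiNeg_eq : phiNeg = oddEulerProd (-1) ^ 2 * expand 2 two_ne_zero (eulerProd (-1)) :=
  rescale_phi_eq (by norm_num)

lemma psi_eq : psi = eulerProd (-1) * eulerProd 1 ^ 2 := by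
  have hu : HasProd (fun i => 1 + 1 * (1 * X : ℤ⟦X⟧) ^ i) (2 * eulerProd 1) := by
    convert (HasProd.zero_mul (f := fun i => 1 + (X : ℤ⟦X⟧) ^ i) (m := eulerProd 1) ?_) using 2
    · simp
    · norm_num
    · simpa using hasProd_eulerProd 1
  have hv : HasProd (fun i => 1 + X * (1 * X : ℤ⟦X⟧) ^ i) (eulerProd 1) := by
    simpa [pow_succ'] using hasProd_eulerProd 1
  have hw : HasProd (fun i => 1 - (1 * X : ℤ⟦X⟧) ^ (i + 1)) (eulerProd (-1)) := by
    simpa [← sub_eq_add_neg] using hasProd_eulerProd (-1)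
  have hs : HasSum (fun k => thetaTerm (1 : ℤ⟦X⟧) X (k + 1)) (psi + (psi - 1)) := by
    convert hasSum_psi.add ((hasSum_nat_add_iff' 1).2 hasSum_psi) using 2 with k
    · rw [thetaTerm, Nat.choose_succ_succ (k + 1), Nat.choose_one_right]
      ring
    · simp
  have htriple := jacobi_triple_product (dvd_mul_left X 1) hu hv hw hs
  have htwo : (2 : ℤ⟦X⟧) ≠ 0 := by
    rw [← map_ofNat (C (R := ℤ)) 2]
    exact (map_ne_zero_iff _ C_injective).2 two_ne_zero
  refine mul_left_cancel₀ htwo ?_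
  linear_combination -htriple

lemma coeff_eulerProd_neg_one_cube {n : ℕ} (hn : ¬ IsSquare (8 * n + 1)) :
    coeff n (eulerProd (-1) ^ 3) = 0 := by
  have hE : Tendsto (qPochhammer (X : ℤ⟦X⟧)) atTop (𝓝 (eulerProd (-1))) := by
    convert (hasProd_eulerProd (-1)).tendsto_prod_nat using 2 with N
    simp [qPochhammer, ← sub_eq_add_neg]
  have hcube : Tendsto (fun N => coeff n (qPochhammer (X : ℤ⟦X⟧) N * qPochhammer X (N + 1) ^ 2))
      atTop (𝓝 (coeff n (eulerProd (-1) ^ 3))) := by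
    rw [pow_succ']
    exact ((WithPiTopology.continuous_coeff ℤ n).tendsto _).comp
      (hE.mul ((hE.comp (tendsto_add_atTop_nat 1)).pow 2))
  refine tendsto_nhds_unique_of_eventuallyEq hcube tendsto_const_nhds ?_
  filter_upwards [eventually_ge_atTop n] with N hN
  have hcoeff := X_pow_dvd_iff.1 (pow_dvd_qPochhammer_mul_sq_sub_sum (X : ℤ⟦X⟧) N) n (by omega)
  rw [map_sub, sub_eq_zero] at hcoeff
  rw [hcoeff, map_sum]
  refine sum_eq_zero fun k _ => ?_
  have hscalar : ((-1) ^ k * (2 * k + 1) : ℤ⟦X⟧) = C ((-1) ^ k * (2 * k + 1) : ℤ) := by simp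
  rw [hscalar, coeff_C_mul, coeff_X_pow, if_neg, mul_zero]
  exact fun h => hn (isSquare_eight_mul_add_one_iff.2 ⟨k, h.symm⟩)

end ThetaFunctions

open PowerSeries in
local notation "S" => expand (R := ℤ) 2 two_ne_zero

section ThetaIdentities

open PowerSeries

lemma expand_two_expand_two (f : ℤ⟦X⟧) : S (S f) = expand 4 four_ne_zero f :=
  (expand_mul 2 two_ne_zero 2 two_ne_zero f).symm

lemma expand_two_expand_two_expand_two (f : ℤ⟦X⟧) : S (S (S f)) = expand 8 (by decide) f := by
  rw [expand_two_expand_two]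
  exact (expand_mul 4 four_ne_zero 2 two_ne_zero f).symm

lemma expand_injective {R : Type*} [CommRing R] {d : ℕ} (hd : d ≠ 0) :
    Function.Injective (expand (R := R) d hd) := fun f g h => by
  ext n
  simpa only [coeff_expand_mul] using congrArg (coeff (d * n)) h

lemma rescale_neg_one_expand_two (f : ℤ⟦X⟧) : rescale (-1) (S f) = S f := by
  ext n
  rw [coeff_rescale, coeff_expand]
  split_ifs with h
  · rw [(even_iff_two_dvd.2 h).neg_one_pow, one_mul]
  · rw [mul_zero]

lemma phi_mul_phiNeg : phi * phiNeg = S phiNeg ^ 2 := by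
  have hodd := congrArg S (oddEulerProd_mul_expand_eulerProd (-1))
  rw [map_mul] at hodd
  rw [phi_eq, phiNeg_eq, map_mul, map_pow]
  calc _ = (oddEulerProd 1 * oddEulerProd (-1)) ^ 2 * S (eulerProd (-1)) ^ 2 := by ring
    _ = S (oddEulerProd (-1)) ^ 2 *
        (S (oddEulerProd (-1)) * S (S (eulerProd (-1)))) ^ 2 := by
      rw [oddEulerProd_one_mul_oddEulerProd_neg_one, hodd]
    _ = _ := by ring

lemma psi_sq : psi ^ 2 = phi * S psi := by
  rw [psi_eq, phi_eq, map_mul, map_pow]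
  calc _ = eulerProd 1 ^ 2 * (eulerProd 1 * eulerProd (-1)) ^ 2 := by ring
    _ = (oddEulerProd 1 * S (eulerProd 1)) ^ 2 * S (eulerProd (-1)) ^ 2 := by
      rw [oddEulerProd_mul_expand_eulerProd, eulerProd_one_mul_eulerProd_neg_one]
    _ = _ := by ring

lemma phiNeg_mul_eulerProd_one : phiNeg * eulerProd 1 = eulerProd (-1) := by
  rw [phiNeg_eq]
  linear_combination
    oddEulerProd (-1) * S (eulerProd (-1)) * oddEulerProd_neg_one_mul_eulerProd_one
      + oddEulerProd_mul_expand_eulerProd (-1)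

lemma phiNeg_sq_mul_psi : phiNeg ^ 2 * psi = eulerProd (-1) ^ 3 := by
  rw [psi_eq]
  linear_combination eulerProd (-1) * (phiNeg * eulerProd 1 + eulerProd (-1)) *
    phiNeg_mul_eulerProd_one

lemma four_dvd_or_eight_dvd_of_isSquare {n : ℕ} (h : IsSquare (n + 1)) : 4 ∣ n + 1 ∨ 8 ∣ n := by
  obtain ⟨r, hr⟩ := h
  rcases Nat.even_or_odd' r with ⟨s, rfl | rfl⟩
  · exact Or.inl ⟨s * s, by rw [hr]; ring⟩
  · obtain ⟨t, ht⟩ := Nat.even_mul_succ_self s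
    exact Or.inr ⟨t, by nlinarith⟩

lemma isSquare_four_mul_iff {n : ℕ} : IsSquare (4 * n) ↔ IsSquare n := by
  refine ⟨fun ⟨r, hr⟩ => ?_, fun ⟨r, hr⟩ => ⟨2 * r, by rw [hr]; ring⟩⟩
  obtain ⟨s, rfl⟩ : 2 ∣ r :=
    Nat.prime_two.dvd_of_dvd_pow (n := 2) (by rw [sq, ← hr]; exact ⟨2 * n, by ring⟩)
  exact ⟨s, by linarith⟩

lemma squareSeries_eq : squareSeries = S (S squareSeries) + X * S (S (S psi)) := by
  rw [expand_two_expand_two_expand_two, expand_two_expand_two]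
  ext n
  rcases n with _ | n
  · simp [squareSeries]
  rw [map_add, coeff_succ_X_mul, coeff_expand, coeff_expand]
  simp only [squareSeries, psi, coeff_mk]
  by_cases h4 : 4 ∣ n + 1
  · obtain ⟨m, hm⟩ := h4
    rw [if_neg (show ¬ 8 ∣ n by omega), hm]
    simp [isSquare_four_mul_iff]
  by_cases h8 : 8 ∣ n
  · rw [if_neg h4, if_pos h8, Nat.mul_div_cancel' h8]
    simp
  · simp [h4, h8, mt four_dvd_or_eight_dvd_of_isSquare (not_or.2 ⟨h4, h8⟩)]

lemma phi_dissection : phi = S (S phi) + 2 * X * S (S (S psi)) := by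
  have hphi : S (S phi) = 1 + 2 * S (S squareSeries) := by
    simp only [phi, map_add, map_one, map_mul, map_ofNat]
  rw [hphi, phi]
  linear_combination 2 * squareSeries_eq

lemma phiNeg_dissection : phiNeg = S (S phi) - 2 * X * S (S (S psi)) := by
  have h := congrArg (rescale (-1)) phi_dissection
  simp only [map_add, map_mul, map_ofNat, rescale_neg_one_expand_two, rescale_neg_one_X] at h
  rw [phiNeg, h]
  ring

lemma phiNeg_sq : phiNeg ^ 2 = S (phi ^ 2) - 4 * X * S (S (psi ^ 2)) := by
  refine expand_injective two_ne_zero ?_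
  rw [map_pow, ← phi_mul_phiNeg, phiNeg_dissection]
  nth_rw 1 [phi_dissection]
  simp only [map_sub, map_mul, map_pow, map_ofNat, expand_X]
  ring

lemma phi_sq : phi ^ 2 = S (phi ^ 2) + 4 * X * S (S (psi ^ 2)) := by
  have hpsi : S (S (psi ^ 2)) = S (S phi) * S (S (S psi)) := by rw [psi_sq, map_mul, map_mul]
  linear_combination phiNeg_sq + (phi + phiNeg) * (phi_dissection - phiNeg_dissection)
    + 4 * X * S (S (S psi)) * (phi_dissection + phiNeg_dissection) - 8 * X * hpsi

end ThetaIdentities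

section GeneratingFunction

open PowerSeries
open scoped PowerSeries.WithPiTopology

/-- The generating function of the partitions into distinct parts all of which satisfy `p`. -/
noncomputable def distinctSeries (p : ℕ → Prop) [DecidablePred p] : ℤ⟦X⟧ :=
  mk fun n => (((Nat.Partition.distincts n).filter fun lam => ∀ i ∈ lam.parts, p i).card : ℤ)

/-- The generating function of the partitions all of whose parts satisfy `p`. -/
noncomputable def restrictedSeries (p : ℕ → Prop) [DecidablePred p] : ℤ⟦X⟧ :=
  mk fun n => ((Nat.Partition.restricted n p).card : ℤ)

/-- The generating function of `regularOverpartitions j k`. -/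
noncomputable def regularOverpartitionSeries (j k : ℕ) : ℤ⟦X⟧ :=
  mk fun n => (regularOverpartitions j k n : ℤ)

lemma regularOverpartitionSeries_eq_mul (j k : ℕ) :
    regularOverpartitionSeries j k =
      distinctSeries (fun i => i % k ≠ j) * restrictedSeries (fun i => i % k ≠ j) := by
  ext n
  rw [coeff_mul, Finset.Nat.sum_antidiagonal_eq_sum_range_succ
    (fun a b => coeff a (distinctSeries _) * coeff b (restrictedSeries _))]
  simp [regularOverpartitionSeries, regularOverpartitions, distinctSeries, restrictedSeries,
    Nat.Partition.restricted]

variable (p : ℕ → Prop) [DecidablePred p]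

lemma hasProd_distinctSeries :
    HasProd (fun i => if p (i + 1) then 1 + (X : ℤ⟦X⟧) ^ (i + 1) else 1) (distinctSeries p) := by
  convert! Nat.Partition.hasProd_genFun (fun i c => if p i ∧ c = 1 then (1 : ℤ) else 0) using 1
  · funext i
    simp_rw [PowerSeries.smul_eq_C_mul]
    rw [tsum_eq_single 0 fun j hj => by simp [hj]]
    split_ifs <;> simp_all
  · ext n
    rw [distinctSeries, coeff_mk, Nat.Partition.coeff_genFun]
    simp_rw [Finsupp.prod, prod_boole, Finset.sum_boole]
    congr 2
    ext lam
    simp only [Nat.Partition.distincts, mem_filter, mem_univ, true_and, Multiset.toFinsupp_support,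
      Multiset.mem_toFinset, Multiset.toFinsupp_apply, Multiset.nodup_iff_count_eq_one]
    grind

lemma hasProd_restrictedSeries :
    HasProd (fun i => if p (i + 1) then ∑' j : ℕ, (X : ℤ⟦X⟧) ^ ((i + 1) * j) else 1)
      (restrictedSeries p) :=
  Nat.Partition.hasProd_powerSeriesMk_card_restricted ℤ p

lemma tsum_X_pow_mul_one_sub (i : ℕ) :
    (∑' j : ℕ, (X : ℤ⟦X⟧) ^ ((i + 1) * j)) * (1 - X ^ (i + 1)) = 1 := by
  simp_rw [pow_mul]
  exact WithPiTopology.tsum_pow_mul_one_sub_of_constantCoeff_eq_zero (by simp)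

lemma mod_two_mul_eq_iff {d n : ℕ} (hd : d ≠ 0) :
    n % (2 * d) = d ↔ ∃ j, n = d * (2 * j + 1) := by
  refine ⟨fun h => ⟨n / (2 * d), ?_⟩, ?_⟩
  · have := Nat.div_add_mod n (2 * d)
    rw [h] at this
    linarith
  · rintro ⟨j, rfl⟩
    rw [show d * (2 * j + 1) = d + 2 * d * j by ring, Nat.add_mul_mod_self_left,
      Nat.mod_eq_of_lt (by omega)]

lemma hasProd_ite_mod_two_mul {d : ℕ} (hd : d ≠ 0) (c : ℤ) :
    HasProd (fun i => if (i + 1) % (2 * d) = d then 1 + C c * (X : ℤ⟦X⟧) ^ (i + 1) else 1)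
      (expand d hd (oddEulerProd c)) := by
  have hpos (j : ℕ) : 0 < d * (2 * j + 1) := by positivity
  have hsucc (j : ℕ) : d * (2 * j + 1) - 1 + 1 = d * (2 * j + 1) := Nat.sub_add_cancel (hpos j)
  have hinj : Function.Injective fun j => d * (2 * j + 1) - 1 := fun j l h => by
    have : d * (2 * j + 1) = d * (2 * l + 1) := Nat.sub_one_cancel (hpos j) (hpos l) h
    simpa [hd] using this
  refine (hinj.hasProd_iff fun i hi => if_neg fun h => hi ?_).1 ?_
  · obtain ⟨j, hj⟩ := (mod_two_mul_eq_iff hd).1 h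
    exact ⟨j, by simp [← hj]⟩
  · convert hasProd_expand_oddEulerProd hd c using 2 with j
    simp only [Function.comp_apply]
    rw [hsucc, if_pos ((mod_two_mul_eq_iff hd).2 ⟨j, rfl⟩)]

variable {d : ℕ} (hd : d ≠ 0)

lemma distinctSeries_mul_expand_oddEulerProd :
    distinctSeries (fun i => i % (2 * d) ≠ d) * expand d hd (oddEulerProd 1) = eulerProd 1 := by
  refine ((hasProd_distinctSeries _).mul (hasProd_ite_mod_two_mul hd 1)).unique ?_
  convert hasProd_eulerProd 1 using 2 with i
  by_cases h : (i + 1) % (2 * d) = d <;> simp [h]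

lemma restrictedSeries_mul_eulerProd :
    restrictedSeries (fun i => i % (2 * d) ≠ d) * eulerProd (-1) =
      expand d hd (oddEulerProd (-1)) := by
  refine ((hasProd_restrictedSeries _).mul (hasProd_eulerProd (-1))).unique ?_
  convert hasProd_ite_mod_two_mul hd (-1) using 2 with i
  by_cases h : (i + 1) % (2 * d) = d <;>
    simp [h, ← sub_eq_add_neg, tsum_X_pow_mul_one_sub]

lemma regularOverpartitionSeries_mul :
    regularOverpartitionSeries d (2 * d) * phiNeg * expand d hd (S phiNeg) =
      expand d hd phiNeg := by
  have hphiNeg : phiNeg = oddEulerProd (-1) * eulerProd (-1) := by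
    linear_combination phiNeg_eq + oddEulerProd (-1) * oddEulerProd_mul_expand_eulerProd (-1)
  have hS : S phiNeg = oddEulerProd 1 * eulerProd (-1) := by
    rw [hphiNeg, map_mul, ← oddEulerProd_one_mul_oddEulerProd_neg_one, mul_assoc,
      oddEulerProd_mul_expand_eulerProd]
  refine (isUnit_eulerProd 1).mul_left_cancel ?_
  rw [hS, map_mul]
  calc _ = distinctSeries (fun i => i % (2 * d) ≠ d) * expand d hd (oddEulerProd 1) *
        (restrictedSeries (fun i => i % (2 * d) ≠ d) * (phiNeg * eulerProd 1)) *
          expand d hd (eulerProd (-1)) := by rw [regularOverpartitionSeries_eq_mul]; ring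
    _ = eulerProd 1 * expand d hd phiNeg := by
      rw [distinctSeries_mul_expand_oddEulerProd, phiNeg_mul_eulerProd_one,
        restrictedSeries_mul_eulerProd hd, mul_assoc, ← map_mul, ← hphiNeg]

end GeneratingFunction

section Dissection

open PowerSeries

variable {R : Type*} [CommRing R]

/-- The series `∑ a (m * n + r) q ^ n` extracted from `∑ a n q ^ n`. -/
noncomputable def dissect (m r : ℕ) : R⟦X⟧ →ₗ[R] R⟦X⟧ where
  toFun f := mk fun n => coeff (m * n + r) f
  map_add' f g := by ext; simp
  map_smul' c f := by ext; simp

lemma coeff_dissect (m r n : ℕ) (f : R⟦X⟧) :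
    coeff n (dissect m r f) = coeff (m * n + r) f := by
  simp [dissect]

lemma dissect_expand_mul {m r : ℕ} (hm : m ≠ 0) (hr : r < m) (f g : R⟦X⟧) :
    dissect m r (expand m hm f * g) = f * dissect m r g := by
  ext n
  rw [coeff_dissect, coeff_mul, coeff_mul]
  symm
  refine sum_of_injOn (fun ij => (m * ij.1, m * ij.2 + r)) ?_ ?_ ?_ ?_
  · rintro ⟨i, j⟩ - ⟨i', j'⟩ - h
    simpa [hm] using h
  · rintro ⟨i, j⟩ h
    rw [mem_coe, HasAntidiagonal.mem_antidiagonal] at h ⊢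
    rw [← h]
    ring
  · rintro ⟨i, j⟩ h hnot
    rw [coeff_expand, if_neg, zero_mul]
    rintro ⟨i, rfl⟩
    rw [HasAntidiagonal.mem_antidiagonal] at h
    have hin : i ≤ n := by
      by_contra! hlt
      nlinarith [Nat.mul_le_mul_left m hlt]
    obtain ⟨k, rfl⟩ := Nat.exists_eq_add_of_le hin
    refine hnot ⟨(i, k), by simp, Prod.ext rfl ?_⟩
    dsimp only
    linarith
  · rintro ⟨i, j⟩ -
    rw [coeff_expand_mul, coeff_dissect]

lemma dissect_mul_expand {m r : ℕ} (hm : m ≠ 0) (hr : r < m) (f g : R⟦X⟧) :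
    dissect m r (f * expand m hm g) = dissect m r f * g := by
  rw [mul_comm, dissect_expand_mul hm hr, mul_comm]

lemma dissect_two_zero (f g : R⟦X⟧) :
    dissect 2 0 (expand 2 two_ne_zero f + X * expand 2 two_ne_zero g) = f := by
  ext n
  rw [coeff_dissect, map_add, add_zero, coeff_expand_mul]
  rcases n with _ | n
  · rw [mul_zero, coeff_zero_X_mul, add_zero]
  · rw [mul_add_one, coeff_succ_X_mul, coeff_expand_of_not_dvd _ _ _ (by omega), add_zero]

lemma dissect_two_one (f g : R⟦X⟧) :
    dissect 2 1 (expand 2 two_ne_zero f + X * expand 2 two_ne_zero g) = g := by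
  ext n
  rw [coeff_dissect, map_add, coeff_succ_X_mul, coeff_expand_mul,
    coeff_expand_of_not_dvd _ _ _ (by omega), zero_add]

end Dissection

section Congruences

open PowerSeries

lemma natCast_dvd_iff {c : ℕ} {f : ℤ⟦X⟧} :
    (c : ℤ⟦X⟧) ∣ f ↔ ∀ n, (c : ℤ) ∣ coeff n f := by
  rw [← map_natCast (C (R := ℤ))]
  constructor
  · rintro ⟨g, rfl⟩ n
    exact ⟨coeff n g, coeff_C_mul n g _⟩
  · intro h
    choose a ha using h
    exact ⟨mk a, by ext n; rw [coeff_C_mul, coeff_mk, ha]⟩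

lemma natCast_dvd_dissect {c : ℕ} {f : ℤ⟦X⟧} (h : (c : ℤ⟦X⟧) ∣ f) (m r : ℕ) :
    (c : ℤ⟦X⟧) ∣ dissect m r f :=
  natCast_dvd_iff.2 fun n => coeff_dissect m r n f ▸ natCast_dvd_iff.1 h _

lemma natCast_dvd_pow_sub_expand (p : ℕ) [hp : Fact p.Prime] (f : ℤ⟦X⟧) :
    (p : ℤ⟦X⟧) ∣ f ^ p - expand p hp.out.ne_zero f := by
  have hfrob : map (Int.castRingHom (ZMod p)) (f ^ p) =
      map (Int.castRingHom (ZMod p)) (expand p hp.out.ne_zero f) := by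
    have h := MvPowerSeries.map_frobenius_expand (p := p) (hp := hp.out.ne_zero)
      (f := map (Int.castRingHom (ZMod p)) f)
    rw [ZMod.frobenius_zmod, MvPowerSeries.map_id] at h
    rw [map_expand, map_pow]
    exact h.symm
  refine natCast_dvd_iff.2 fun n => (ZMod.intCast_zmod_eq_zero_iff_dvd _ p).1 ?_
  simpa only [coeff_map, eq_intCast, map_sub, Int.cast_sub, sub_eq_zero] using
    congrArg (coeff n) hfrob

end Congruences

section CongruenceModSixtyFour

open PowerSeries

local notation "P" => regularOverpartitionSeries 4 8

lemma phiNeg_eq_one_add : phiNeg = 1 + 2 * rescale (-1) squareSeries := by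
  rw [phiNeg, phi, map_add, map_one, map_mul, map_ofNat]

lemma phiNeg_ne_zero : phiNeg ≠ 0 :=
  left_ne_zero_of_mul (phiNeg_mul_eulerProd_one ▸ (isUnit_eulerProd (-1)).ne_zero)

lemma sixteen_dvd_phiNeg_pow_eight_sub_one : (16 : ℤ⟦X⟧) ∣ phiNeg ^ 8 - 1 := by
  rw [phiNeg_eq_one_add]
  set x := rescale (-1) squareSeries
  exact ⟨x + 7 * x ^ 2 + 28 * x ^ 3 + 70 * x ^ 4 + 112 * x ^ 5 + 112 * x ^ 6 + 64 * x ^ 7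
    + 16 * x ^ 8, by ring⟩

lemma sixteen_dvd_phi_pow_four_sub :
    (16 : ℤ⟦X⟧) ∣ phi ^ 4 - (1 + 8 * squareSeries + 8 * S squareSeries) := by
  obtain ⟨z, hz⟩ := natCast_dvd_pow_sub_expand 2 squareSeries
  set y := squareSeries
  exact ⟨y ^ 2 + z + 2 * y ^ 3 + y ^ 4, by rw [phi]; push_cast at hz; linear_combination 8 * hz⟩

lemma phi_pow_four_dissection :
    phi ^ 4 = S (phi ^ 4 + 16 * X * S psi ^ 4) + X * S (8 * phi ^ 2 * S psi ^ 2) := by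
  have hphi := phi_sq
  simp only [map_add, map_mul, map_pow, map_ofNat, expand_X] at hphi ⊢
  linear_combination (phi ^ 2 + S phi ^ 2 + 4 * X * S (S psi) ^ 2) * hphi

lemma dissect_zero_phi : dissect 2 0 phi = S phi := by
  convert dissect_two_zero (S phi) (2 * S (S psi)) using 2
  rw [map_mul, map_ofNat]
  linear_combination phi_dissection

lemma dissect_one_phi_sq : dissect 2 1 (phi ^ 2) = 4 * S (psi ^ 2) := by
  convert dissect_two_one (phi ^ 2) (4 * S (psi ^ 2)) using 2
  rw [map_mul, map_ofNat]
  linear_combination phi_sq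

lemma dissect_zero_phi_pow_four : dissect 2 0 (phi ^ 4) = phi ^ 4 + 16 * X * S psi ^ 4 := by
  nth_rw 1 [phi_pow_four_dissection, dissect_two_zero]

lemma regularOverpartitionSeries_four_eight_mul :
    P * S (S (phiNeg ^ 3 * S phiNeg)) = phi * S (phi ^ 2) := by
  have hP : P * phiNeg * S (S (S phiNeg)) = S (S phiNeg) := by
    rw [expand_two_expand_two (S phiNeg), expand_two_expand_two phiNeg]
    exact regularOverpartitionSeries_mul four_ne_zero
  have hS := congrArg S phi_mul_phiNeg
  have hne : S (S phiNeg) ≠ 0 := by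
    rw [expand_two_expand_two]
    exact (map_ne_zero_iff _ (expand_injective four_ne_zero)).2 phiNeg_ne_zero
  simp only [map_mul, map_pow] at hS ⊢
  refine mul_right_cancel₀ hne ?_
  calc P * (S (S phiNeg) ^ 3 * S (S (S phiNeg))) * S (S phiNeg)
      = P * (S (S phiNeg) ^ 2) ^ 2 * S (S (S phiNeg)) := by ring
    _ = P * (S phi ^ 2 * (phi * phiNeg)) * S (S (S phiNeg)) := by
      rw [← hS, phi_mul_phiNeg]
      ring
    _ = phi * S phi ^ 2 * (P * phiNeg * S (S (S phiNeg))) := by ring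
    _ = phi * S phi ^ 2 * S (S phiNeg) := by rw [hP]

lemma dissect_zero_regularOverpartitionSeries_mul :
    dissect 2 0 P * S (phiNeg ^ 3 * S phiNeg) = phi ^ 2 * S phi := by
  rw [← dissect_mul_expand two_ne_zero two_pos, regularOverpartitionSeries_four_eight_mul,
    dissect_mul_expand two_ne_zero two_pos, dissect_zero_phi, mul_comm]

lemma dissect_one_dissect_zero_regularOverpartitionSeries_mul :
    dissect 2 1 (dissect 2 0 P) * (phiNeg ^ 3 * S phiNeg) = 4 * phi * S (psi ^ 2) := by
  rw [← dissect_mul_expand two_ne_zero one_lt_two, dissect_zero_regularOverpartitionSeries_mul,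
    dissect_mul_expand two_ne_zero one_lt_two, dissect_one_phi_sq]
  ring

/-- The generating function of `n ↦ regularOverpartitions 4 8 (8 * n + 2)`. -/
noncomputable def eightAddTwoSeries : ℤ⟦X⟧ := dissect 2 0 (dissect 2 1 (dissect 2 0 P))

lemma eightAddTwoSeries_mul :
    eightAddTwoSeries * phiNeg ^ 7 = 4 * (phi ^ 4 + 16 * X * S psi ^ 4) * psi ^ 2 := by
  have hpow : dissect 2 1 (dissect 2 0 P) * S (phiNeg ^ 7) = phi ^ 4 * S (4 * psi ^ 2) := by
    rw [map_mul, map_ofNat, map_pow]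
    linear_combination phi ^ 3 * dissect_one_dissect_zero_regularOverpartitionSeries_mul
      - dissect 2 1 (dissect 2 0 P) * S phiNeg *
        ((phi * phiNeg) ^ 2 + phi * phiNeg * S phiNeg ^ 2 + S phiNeg ^ 4) * phi_mul_phiNeg
  rw [eightAddTwoSeries, ← dissect_mul_expand two_ne_zero two_pos, hpow,
    dissect_mul_expand two_ne_zero two_pos, dissect_zero_phi_pow_four]
  ring

lemma sixtyFour_dvd_eightAddTwoSeries_sub :
    (64 : ℤ⟦X⟧) ∣ eightAddTwoSeries - phi ^ 4 * S (4 * eulerProd (-1) ^ 3) := by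
  obtain ⟨K, hK⟩ := sixteen_dvd_phiNeg_pow_eight_sub_one
  have hpsi : psi ^ 2 * phiNeg = S (eulerProd (-1) ^ 3) := by
    rw [← phiNeg_sq_mul_psi, map_mul, map_pow]
    linear_combination phiNeg * psi_sq + S psi * phi_mul_phiNeg
  rw [map_mul, map_ofNat, ← hpsi]
  set T := eightAddTwoSeries
  set M := (phi ^ 4 + 16 * X * S psi ^ 4) * psi ^ 2 * phiNeg
  have hT : T = 4 * (M - 4 * K * T) := by
    linear_combination phiNeg * eightAddTwoSeries_mul - T * hK
  refine ⟨X * S psi ^ 4 * psi ^ 2 * phiNeg - K * (M - 4 * K * T), ?_⟩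
  linear_combination (1 - 16 * K) * hT

lemma sixtyFour_dvd_dissect_eightAddTwoSeries_sub :
    (64 : ℤ⟦X⟧) ∣ dissect 2 0 eightAddTwoSeries -
      4 * (1 + 8 * squareSeries + 8 * S squareSeries) * eulerProd (-1) ^ 3 := by
  have hdissect : (64 : ℤ⟦X⟧) ∣ dissect 2 0 eightAddTwoSeries -
      (phi ^ 4 + 16 * X * S psi ^ 4) * (4 * eulerProd (-1) ^ 3) := by
    have h := natCast_dvd_dissect (c := 64) (mod_cast sixtyFour_dvd_eightAddTwoSeries_sub) 2 0
    rw [map_sub, dissect_mul_expand two_ne_zero two_pos, dissect_zero_phi_pow_four] at h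
    exact_mod_cast h
  obtain ⟨Z, hZ⟩ := hdissect
  obtain ⟨W, hW⟩ := sixteen_dvd_phi_pow_four_sub
  refine ⟨Z + (W + X * S psi ^ 4) * eulerProd (-1) ^ 3, ?_⟩
  linear_combination hZ + 4 * eulerProd (-1) ^ 3 * hW

lemma coeff_dissect_eightAddTwoSeries (n : ℕ) :
    coeff n (dissect 2 0 eightAddTwoSeries) = regularOverpartitions 4 8 (2 * (8 * n + 1)) := by
  simp only [eightAddTwoSeries, coeff_dissect, regularOverpartitionSeries, coeff_mk]
  ring_nf

lemma coeff_expand_squareSeries_mul_eulerProd_cube {d n : ℕ} (hd : d ≠ 0)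
    (hn : ∀ x r : ℕ, x ^ 2 + 8 * d * r ^ 2 ≠ 8 * n + 1) :
    coeff n (expand d hd squareSeries * eulerProd (-1) ^ 3) = 0 := by
  rw [coeff_mul]
  refine sum_eq_zero fun ⟨i, j⟩ hij => ?_
  rw [HasAntidiagonal.mem_antidiagonal] at hij
  by_cases hj : IsSquare (8 * j + 1)
  · rw [coeff_expand]
    split_ifs with hi
    · obtain ⟨i, rfl⟩ := hi
      rw [Nat.mul_div_cancel_left i (Nat.pos_of_ne_zero hd), squareSeries, coeff_mk, if_neg,
        zero_mul]
      rintro ⟨-, r, rfl⟩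
      obtain ⟨x, hx⟩ := hj
      refine hn x r ?_
      rw [← hij, sq, ← hx]
      ring
    · rw [zero_mul]
  · rw [coeff_eulerProd_neg_one_cube hj, mul_zero]

theorem sixtyFour_dvd_regularOverpartitions {m : ℕ} (hm : m % 8 = 1)
    (hsq : ∀ x y : ℕ, x ^ 2 + y ^ 2 ≠ m) (htwo : ∀ x y : ℕ, x ^ 2 + 2 * y ^ 2 ≠ m) :
    64 ∣ regularOverpartitions 4 8 (2 * m) := by
  obtain ⟨n, rfl⟩ : ∃ n, m = 8 * n + 1 := ⟨m / 8, by omega⟩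
  have hcube : coeff n (eulerProd (-1) ^ 3) = 0 :=
    coeff_eulerProd_neg_one_cube fun ⟨x, hx⟩ => hsq x 0 (by rw [hx]; ring)
  have hone : coeff n (squareSeries * eulerProd (-1) ^ 3) = 0 := by
    rw [← expand_one_apply squareSeries]
    exact coeff_expand_squareSeries_mul_eulerProd_cube one_ne_zero fun x r h =>
      htwo x (2 * r) (by rw [← h]; ring)
  have hexp : coeff n (S squareSeries * eulerProd (-1) ^ 3) = 0 :=
    coeff_expand_squareSeries_mul_eulerProd_cube two_ne_zero fun x r h =>
      hsq x (4 * r) (by rw [← h]; ring)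
  have hzero : coeff n (4 * (1 + 8 * squareSeries + 8 * S squareSeries) * eulerProd (-1) ^ 3) =
      0 := by
    have hC : 4 * (1 + 8 * squareSeries + 8 * S squareSeries) * eulerProd (-1) ^ 3 =
        C 4 * eulerProd (-1) ^ 3 + C 32 * (squareSeries * eulerProd (-1) ^ 3) +
          C 32 * (S squareSeries * eulerProd (-1) ^ 3) := by
      simp only [map_ofNat]
      ring
    simp only [hC, map_add, coeff_C_mul, hcube, hone, hexp, mul_zero, add_zero]
  have hdvd := natCast_dvd_iff (c := 64).1 (mod_cast sixtyFour_dvd_dissect_eightAddTwoSeries_sub) n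
  rw [map_sub, hzero, sub_zero, coeff_dissect_eightAddTwoSeries] at hdvd
  exact_mod_cast hdvd

end CongruenceModSixtyFour

section QuadraticForms

lemma sq_sub_mul_sq_ne {p : ℕ} [Fact p.Prime] {a : ℤ} (ha : legendreSym p a = -1) {t : ℤ}
    (ht : ¬ (p : ℤ) ∣ t) (β : ℕ) (x y : ℤ) : x ^ 2 - a * y ^ 2 ≠ p ^ (2 * β + 1) * t := by
  have hp : (p : ℤ) ≠ 0 := mod_cast (Fact.out : p.Prime).ne_zero
  induction β generalizing x y with
  | zero =>
    intro h
    obtain ⟨⟨x, rfl⟩, ⟨y, rfl⟩⟩ :=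
      legendreSym.prime_dvd_of_eq_neg_one ha ⟨p ^ (2 * 0) * t, by rw [h]; ring⟩
    exact ht ⟨x ^ 2 - a * y ^ 2, mul_left_cancel₀ hp (by linear_combination -h)⟩
  | succ β ih =>
    intro h
    obtain ⟨⟨x, rfl⟩, ⟨y, rfl⟩⟩ :=
      legendreSym.prime_dvd_of_eq_neg_one ha ⟨p ^ (2 * (β + 1)) * t, by rw [h]; ring⟩
    exact ih x y (mul_left_cancel₀ (pow_ne_zero 2 hp) (by linear_combination h))

lemma legendreSym_neg_one_of_mod_eight_eq_seven {p : ℕ} [Fact p.Prime] (hp : p % 8 = 7) :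
    legendreSym p (-1) = -1 := by
  rw [legendreSym.at_neg_one (by rintro rfl; omega), ZMod.χ₄_nat_three_mod_four (by omega)]

lemma legendreSym_neg_two_of_mod_eight_eq_seven {p : ℕ} [Fact p.Prime] (hp : p % 8 = 7) :
    legendreSym p (-2) = -1 := by
  rw [legendreSym.at_neg_two (by rintro rfl; omega), ZMod.χ₈'_nat_eq_if_mod_eight,
    if_neg (by omega), if_neg (by omega)]

end QuadraticForms

end RegularOverpartition

open RegularOverpartition

theorem stmt_1_general {p : ℕ} (hp : p.Prime) (hp8 : p % 8 = 7) {t : ℕ} (ht8 : t % 8 = 7)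
    (hpt : ¬ p ∣ t) (β : ℕ) : 64 ∣ regularOverpartitions 4 8 (2 * (p ^ (2 * β + 1) * t)) := by
  have : Fact p.Prime := ⟨hp⟩
  have hpt' : ¬ (p : ℤ) ∣ t := mod_cast hpt
  have hmod : p ^ (2 * β + 1) * t % 8 = 1 := by
    have hp_sq : p ^ 2 % 8 = 1 := by simp [Nat.pow_mod, hp8]
    rw [pow_succ, pow_mul, Nat.mul_mod, Nat.mul_mod _ p, Nat.pow_mod, hp_sq, hp8, ht8]
    simp
  refine sixtyFour_dvd_regularOverpartitions hmod (fun x y h => ?_) fun x y h => ?_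
  · exact sq_sub_mul_sq_ne (legendreSym_neg_one_of_mod_eight_eq_seven hp8) hpt' β x y
      (by rw [neg_one_mul, sub_neg_eq_add]; exact_mod_cast h)
  · exact sq_sub_mul_sq_ne (legendreSym_neg_two_of_mod_eight_eq_seven hp8) hpt' β x y
      (by rw [neg_mul, sub_neg_eq_add]; exact_mod_cast h)

theorem stmt_1 (n α β : ℕ) (k : ℕ) (hk : k ∈ ({1, 2, 3, 4, 5, 6} : Finset ℕ)) :
    64 ∣ regularOverpartitions 4 8 (5 ^ (2 * α) * 7 ^ (2 * β + 1) * (16 * (7 * n + k) + 14)) := by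
  have hk7 : ¬ 7 ∣ 8 * (7 * n + k) + 7 := by
    simp only [Finset.mem_insert, Finset.mem_singleton] at hk
    omega
  have hcop : Nat.Coprime 7 (5 ^ (2 * α)) := Nat.Coprime.pow_right _ (by norm_num)
  have hmod : 5 ^ (2 * α) * (8 * (7 * n + k) + 7) % 8 = 7 := by
    rw [pow_mul, Nat.mul_mod, Nat.pow_mod, Nat.mul_add_mod]
    norm_num
  convert stmt_1_general Nat.prime_seven rfl hmod (mt hcop.dvd_of_dvd_mul_left hk7) β using 2
  ring
end

section
/- For all integers n ≥ 0 and every t ∈ {6, 10, 14}, the number of (4,8)-regular overpartitions satisfies p̄_{4,8}(16n + t) ≡ 0 (mod 32). -/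
/-! Write `P` for the generating function and `φ(q) = ∑_{n ∈ ℤ} q^(n²)`. Gauss's identity
`φ(-q) = ∏ (1 - qⁿ) / (1 + qⁿ)` turns the product for `P` into `P · φ(-q) φ(-q⁸) = φ(-q⁴)`, and
iterating `φ(q) φ(-q) = φ(-q²)²` gives `P · φ(-q⁸)⁷ = φ(q) φ(q²)² φ(q⁴)³`. As `φ ≡ 1 (mod 2)`, we
have `φ(-q⁸)¹⁶ ≡ 1 (mod 32)`, so `P ≡ φ(q) φ(q²)² φ(q⁴)³ φ(-q⁸)⁹`. Dissecting
`φ(q) = φ(q⁴) + 2q ψ(q⁸)`, the exponents congruent to `2` modulo `4` come from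
`4q² ψ(q¹⁶) φ(q⁴)⁴ φ(q⁸) φ(-q⁸)⁹ ≡ 4q² ψ(q¹⁶) φ(-q¹⁶)²`, a series supported on exponents
congruent to `2` modulo `16`. -/

open Filter Finset PowerSeries
open scoped PowerSeries.WithPiTopology

section FiniteIdentity

variable {R : Type*} [CommRing R]

/-- The partial sum `∑_{|j| ≤ n} (-1)^j q^(j²)` of Gauss's theta series. -/
def gaussPartialSum (q : R) (n : ℕ) : R :=
  1 + ∑ j ∈ range n, 2 * (-1) ^ (j + 1) * q ^ (j + 1) ^ 2

/-- The `s`-th correction term in the finite form of Gauss's identity: the error of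
truncation at `n` is the sum of these terms over `s < n`. -/
def gaussCorrection (q : R) (n s : ℕ) : R :=
  2 * (-1) ^ (s + 1) * q ^ ((s + 1) * (n + 1)) *
    (∏ k ∈ range s, (1 + q ^ (k + 1))) * ∏ k ∈ Ico (s + 1) n, (1 - q ^ (k + 1))

theorem sum_gaussCorrection_succ_sub (q : R) {n j : ℕ} (hj : j ≤ n) :
    ∏ k ∈ range (n + 1), (1 - q ^ (k + 1)) -
        (1 + q ^ (n + 1)) * ∏ k ∈ range n, (1 - q ^ (k + 1)) +
      ∑ s ∈ range j, (gaussCorrection q (n + 1) s - (1 + q ^ (n + 1)) * gaussCorrection q n s) =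
    2 * (-1) ^ (j + 1) * q ^ ((j + 1) * (n + 1)) *
      (∏ k ∈ range j, (1 + q ^ (k + 1))) * ∏ k ∈ Ico j n, (1 - q ^ (k + 1)) := by
  induction j with
  | zero =>
    rw [prod_range_succ, range_zero, sum_empty, prod_empty, ← range_eq_Ico]
    ring
  | succ j ih =>
    rw [sum_range_succ, ← add_assoc, ih (by omega), gaussCorrection, gaussCorrection,
      prod_eq_prod_Ico_succ_bot (show j < n by omega), prod_Ico_succ_top hj, prod_range_succ]
    ring

theorem gaussPartialSum_mul_prod (q : R) (n : ℕ) :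
    gaussPartialSum q n * ∏ k ∈ range n, (1 + q ^ (k + 1)) =
      ∏ k ∈ range n, (1 - q ^ (k + 1)) + ∑ s ∈ range n, gaussCorrection q n s := by
  induction n with
  | zero => simp [gaussPartialSum]
  | succ n ih =>
    have step := sum_gaussCorrection_succ_sub q (le_refl n)
    have last : gaussCorrection q (n + 1) n =
        2 * (-1) ^ (n + 1) * q ^ ((n + 1) * (n + 2)) * ∏ k ∈ range n, (1 + q ^ (k + 1)) := by
      simp [gaussCorrection]
    rw [sum_sub_distrib, ← mul_sum, Ico_self, prod_empty] at step
    rw [gaussPartialSum] at ih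
    rw [gaussPartialSum, sum_range_succ, sum_range_succ, last,
      prod_range_succ (fun k ↦ 1 + q ^ (k + 1))]
    linear_combination (1 + q ^ (n + 1)) * ih - step

theorem pow_dvd_gaussPartialSum_mul_prod_sub (q : R) (n : ℕ) :
    q ^ (n + 1) ∣ gaussPartialSum q n * ∏ k ∈ range n, (1 + q ^ (k + 1)) -
      ∏ k ∈ range n, (1 - q ^ (k + 1)) := by
  rw [gaussPartialSum_mul_prod, add_sub_cancel_left]
  refine dvd_sum fun s _ ↦ ?_
  have hpow : q ^ (n + 1) ∣ q ^ ((s + 1) * (n + 1)) :=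
    pow_dvd_pow q (Nat.le_mul_of_pos_left _ s.succ_pos)
  exact ((hpow.mul_left _).mul_right _).mul_right _

end FiniteIdentity

section InfiniteProduct

/-- The formal infinite product `∏_{n ≥ 1} (1 + c n * X ^ n)`; the value `c 0` is ignored. -/
noncomputable def prodOneAdd {R : Type*} [CommSemiring R] [TopologicalSpace R]
    (c : ℕ → R) : R⟦X⟧ :=
  ∏' k : ℕ, (1 + monomial (k + 1) (c (k + 1)))

section Semiring

variable {R : Type*} [CommSemiring R] [TopologicalSpace R]

theorem multipliable_one_add_monomial (c : ℕ → R) :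
    Multipliable fun k : ℕ ↦ (1 : R⟦X⟧) + monomial (k + 1) (c (k + 1)) := by
  apply PowerSeries.WithPiTopology.multipliable_one_add_of_tendsto_order_atTop_nhds_top
  refine ENat.tendsto_nhds_top_iff_natCast_lt.mpr fun n ↦ eventually_atTop.mpr ⟨n, fun m hm ↦ ?_⟩
  classical
  rw [order_monomial]
  split_ifs
  · exact ENat.natCast_lt_top n
  · exact_mod_cast Nat.lt_succ_of_le hm

theorem hasProd_prodOneAdd (c : ℕ → R) :
    HasProd (fun k : ℕ ↦ (1 : R⟦X⟧) + monomial (k + 1) (c (k + 1))) (prodOneAdd c) :=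
  (multipliable_one_add_monomial c).hasProd

theorem continuous_of_continuous_coeff {f : R⟦X⟧ → R⟦X⟧}
    (hf : ∀ n, Continuous fun a ↦ coeff n (f a)) : Continuous f :=
  continuous_iff_continuousAt.mpr fun a ↦
    (PowerSeries.WithPiTopology.tendsto_iff_coeff_tendsto R _ _ _).mpr fun n ↦ (hf n).tendsto a

theorem continuous_rescale [ContinuousMul R] (u : R) : Continuous (rescale u) := by
  refine continuous_of_continuous_coeff fun n ↦ ?_
  simp_rw [coeff_rescale]
  exact continuous_const.mul (PowerSeries.WithPiTopology.continuous_coeff R n)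

variable [T2Space R]

theorem constantCoeff_prodOneAdd (c : ℕ → R) : constantCoeff (prodOneAdd c) = 1 := by
  have hconst := (hasProd_prodOneAdd c).map constantCoeff
    (PowerSeries.WithPiTopology.continuous_constantCoeff R)
  have hfactor : constantCoeff ∘ (fun k : ℕ ↦ (1 : R⟦X⟧) + monomial (k + 1) (c (k + 1))) = 1 := by
    funext k
    rw [Function.comp_apply, map_add, map_one, ← coeff_zero_eq_constantCoeff_apply,
      coeff_monomial, if_neg k.succ_ne_zero.symm, add_zero, Pi.one_apply]
  rw [hfactor] at hconst
  exact hconst.unique hasProd_one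

theorem rescale_prodOneAdd [ContinuousMul R] (u : R) (c : ℕ → R) :
    rescale u (prodOneAdd c) = prodOneAdd fun n ↦ u ^ n * c n := by
  refine ((hasProd_prodOneAdd c).map (rescale u) (continuous_rescale u)).unique ?_
  convert hasProd_prodOneAdd fun n ↦ u ^ n * c n using 2 with k
  ext n
  simp only [Function.comp_apply, map_add, map_one, coeff_rescale, coeff_monomial]
  split_ifs with h <;> simp [h]

variable [IsTopologicalSemiring R]

theorem prodOneAdd_add {c d : ℕ → R} (hcd : ∀ n, c n * d n = 0) :
    prodOneAdd (c + d) = prodOneAdd c * prodOneAdd d := by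
  refine (hasProd_prodOneAdd (c + d)).unique ?_
  convert (hasProd_prodOneAdd c).mul (hasProd_prodOneAdd d) using 2 with k
  rw [Pi.add_apply, map_add, add_mul, one_mul, mul_add, mul_one, monomial_mul_monomial, hcd,
    map_zero, add_zero]
  ring

theorem prodOneAdd_indicator_union {s t : Set ℕ} (hst : Disjoint s t) (c : ℕ → R) :
    prodOneAdd ((s ∪ t).indicator c) =
      prodOneAdd (s.indicator c) * prodOneAdd (t.indicator c) := by
  rw [Set.indicator_union_of_disjoint hst]
  refine prodOneAdd_add fun n ↦ ?_
  by_cases hs : n ∈ s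
  · simp [Set.indicator_of_notMem (hst.notMem_of_mem_left hs)]
  · simp [Set.indicator_of_notMem hs]

theorem prodOneAdd_eq_mul_compl (s : Set ℕ) (c : ℕ → R) :
    prodOneAdd c = prodOneAdd (s.indicator c) * prodOneAdd (sᶜ.indicator c) := by
  rw [← prodOneAdd_indicator_union disjoint_compl_right, Set.union_compl_self,
    Set.indicator_univ]

end Semiring

section Ring

variable {R : Type*} [CommRing R] [TopologicalSpace R]

theorem rescale_neg_one_prodOneAdd [T2Space R] [IsTopologicalRing R] (c : ℕ → R) :
    rescale (-1) (prodOneAdd c) =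
      prodOneAdd ({n | 2 ∣ n}.indicator c) * prodOneAdd ({n | 2 ∣ n}ᶜ.indicator (-c)) := by
  have heven : {n | 2 ∣ n}.indicator (fun n ↦ (-1) ^ n * c n) = {n | 2 ∣ n}.indicator c :=
    Set.indicator_congr fun n hn ↦ by simp [(even_iff_two_dvd.mpr hn).neg_one_pow]
  have hodd : {n | 2 ∣ n}ᶜ.indicator (fun n ↦ (-1) ^ n * c n) = {n | 2 ∣ n}ᶜ.indicator (-c) :=
    Set.indicator_congr fun n hn ↦ by
      simp [(Nat.not_even_iff_odd.mp (mt even_iff_two_dvd.mp hn)).neg_one_pow]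
  rw [rescale_prodOneAdd, prodOneAdd_eq_mul_compl {n | 2 ∣ n}, heven, hodd]

theorem continuous_expand (m : ℕ) (hm : m ≠ 0) : Continuous (expand (R := R) m hm) := by
  refine continuous_of_continuous_coeff fun n ↦ ?_
  simp_rw [coeff_expand]
  split_ifs
  · exact PowerSeries.WithPiTopology.continuous_coeff R _
  · exact continuous_const

variable [T2Space R]

theorem isUnit_prodOneAdd (c : ℕ → R) : IsUnit (prodOneAdd c) :=
  isUnit_iff_constantCoeff.mpr (constantCoeff_prodOneAdd c ▸ isUnit_one)

theorem expand_prodOneAdd (m : ℕ) (hm : m ≠ 0) (c : ℕ → R) :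
    expand m hm (prodOneAdd fun n ↦ c (m * n)) = prodOneAdd ({n | m ∣ n}.indicator c) := by
  have hexpand := (hasProd_prodOneAdd fun n ↦ c (m * n)).map (expand m hm) (continuous_expand m hm)
  have hsucc (k : ℕ) : m * (k + 1) - 1 + 1 = m * (k + 1) :=
    Nat.sub_add_cancel (Nat.mul_pos (Nat.pos_of_ne_zero hm) k.succ_pos)
  have hinj : Function.Injective fun k : ℕ ↦ m * (k + 1) - 1 := fun a b hab ↦ by
    have : m * (a + 1) = m * (b + 1) := by rw [← hsucc a, ← hsucc b]; exact congrArg (· + 1) hab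
    simpa [hm] using this
  refine HasProd.unique ?_ (hasProd_prodOneAdd ({n | m ∣ n}.indicator c))
  rw [← hinj.hasProd_iff]
  · convert! hexpand using 1
    funext k
    simp [hsucc, expand_monomial]
  · intro k hk
    have hndvd : ¬ m ∣ k + 1 := by
      rintro ⟨_ | l, hl⟩
      · simp at hl
      · exact hk ⟨l, by simp only [← hl, Nat.add_sub_cancel]⟩
    simp [hndvd]

end Ring

end InfiniteProduct

section GeneratingFunctions

variable {R : Type*} [TopologicalSpace R] [T2Space R] (p : ℕ → Prop) [DecidablePred p]

theorem mk_card_distincts_filter [CommSemiring R] :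
    mk (fun n ↦ (#{lam ∈ Nat.Partition.distincts n | ∀ i ∈ lam.parts, p i} : R)) =
      prodOneAdd ({i | p i}.indicator 1) := by
  have hgenFun : Nat.Partition.genFun (fun i c ↦ if p i ∧ c < 2 then (1 : R) else 0) =
      mk fun n ↦ (#{lam ∈ Nat.Partition.distincts n | ∀ i ∈ lam.parts, p i} : R) := by
    simp_rw [Nat.Partition.genFun, ← Nat.Partition.countRestricted_two,
      Nat.Partition.countRestricted, filter_filter, card_filter, Finsupp.prod, prod_boole]
    simp [and_comm, forall_and]
  rw [← hgenFun]
  refine (Nat.Partition.hasProd_genFun _).unique ?_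
  convert hasProd_prodOneAdd ({i | p i}.indicator (1 : ℕ → R)) using 2 with k
  rw [tsum_eq_single 0 fun j hj ↦ by simp [hj]]
  by_cases hp : p (k + 1) <;> simp [hp, X_pow_eq]

theorem mk_card_restricted_mul_prodOneAdd [CommRing R] [IsTopologicalRing R] :
    mk (fun n ↦ (#(Nat.Partition.restricted n p) : R)) *
      prodOneAdd ({i | p i}.indicator (-1)) = 1 := by
  refine ((Nat.Partition.hasProd_powerSeriesMk_card_restricted R p).mul
    (hasProd_prodOneAdd _)).unique ?_
  convert hasProd_one using 2 with k
  by_cases hp : p (k + 1)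
  · have hsub : (1 : R⟦X⟧) + monomial (k + 1) (-1) = 1 - X ^ (k + 1) := by
      rw [map_neg, X_pow_eq, sub_eq_add_neg]
    simp only [hp, if_true, Set.mem_ofPred_eq, Set.indicator_of_mem, Pi.neg_apply, Pi.one_apply,
      hsub, pow_mul]
    exact PowerSeries.WithPiTopology.tsum_pow_mul_one_sub_of_constantCoeff_eq_zero (by simp)
  · simp [hp]

end GeneratingFunctions

/-- The generating function of the `(j,k)`-regular overpartitions, with coefficients in `R`. -/
def regularOverpartitionSeries (R : Type*) [Semiring R] (j k : ℕ) : R⟦X⟧ :=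
  mk fun n ↦ (regularOverpartitions j k n : R)

theorem regularOverpartitionSeries_mul_prodOneAdd {R : Type*} [CommRing R] [TopologicalSpace R]
    [T2Space R] [IsTopologicalRing R] (j k : ℕ) :
    regularOverpartitionSeries R j k * prodOneAdd ({i | i % k ≠ j}.indicator (-1)) =
      prodOneAdd ({i | i % k ≠ j}.indicator 1) := by
  have hconv : regularOverpartitionSeries R j k =
      mk (fun n ↦ (#{lam ∈ Nat.Partition.distincts n | ∀ i ∈ lam.parts, i % k ≠ j} : R)) *
        mk (fun n ↦ (#(Nat.Partition.restricted n (· % k ≠ j)) : R)) := by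
    ext n
    rw [coeff_mul, Nat.sum_antidiagonal_eq_sum_range_succ_mk]
    simp only [regularOverpartitionSeries, regularOverpartitions, coeff_mk, Nat.cast_sum,
      Nat.cast_mul, Nat.Partition.restricted]
  rw [hconv, mul_assoc, mk_card_restricted_mul_prodOneAdd, mul_one, mk_card_distincts_filter]

section Theta

/-- The series `∑_{n ≥ 1} X ^ (n²)`. -/
noncomputable def positiveSquareSeries (R : Type*) [Semiring R] : R⟦X⟧ :=
  open scoped Classical in mk fun n ↦ if n ≠ 0 ∧ IsSquare n then 1 else 0

/-- Ramanujan's theta function `φ = ∑_{n ∈ ℤ} X ^ (n²)`. -/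
noncomputable def ramanujanPhi (R : Type*) [Semiring R] : R⟦X⟧ :=
  1 + 2 * positiveSquareSeries R

/-- Ramanujan's theta function `φ` at `-X`, that is `∑_{n ∈ ℤ} (-1) ^ n * X ^ (n²)`. -/
noncomputable def ramanujanPhiNeg (R : Type*) [CommRing R] : R⟦X⟧ :=
  rescale (-1) (ramanujanPhi R)

/-- Ramanujan's theta function `ψ = ∑_{n ≥ 0} X ^ (n (n + 1) / 2)`, where triangular numbers
are recognised as the `n` for which `8 * n + 1` is a square. -/
noncomputable def ramanujanPsi (R : Type*) [Semiring R] : R⟦X⟧ :=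
  open scoped Classical in mk fun n ↦ if IsSquare (8 * n + 1) then 1 else 0

theorem coeff_sum_X_pow_sq (R : Type*) [Semiring R] {d n : ℕ} (hd : d ≤ n) :
    coeff d (∑ j ∈ range n, (X : R⟦X⟧) ^ (j + 1) ^ 2) = coeff d (positiveSquareSeries R) := by
  simp only [map_sum, coeff_X_pow, positiveSquareSeries, coeff_mk]
  split_ifs with hsq
  · obtain ⟨hd0, r, rfl⟩ := hsq
    have hr : 0 < r := Nat.pos_of_ne_zero fun h ↦ hd0 (by simp [h])
    have hroot (j : ℕ) : r * r = (j + 1) ^ 2 ↔ r - 1 = j := by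
      rw [← sq, Nat.pow_left_inj two_ne_zero]; omega
    have hmem : r - 1 ∈ range n := mem_range.mpr (by have := Nat.le_mul_self r; omega)
    simp_rw [hroot, sum_ite_eq, if_pos hmem]
  · refine sum_eq_zero fun j _ ↦ if_neg fun hj ↦ hsq ⟨?_, j + 1, ?_⟩
    · rw [hj]; positivity
    · rw [hj, sq]

variable (R : Type*) [CommRing R]

theorem gaussPartialSum_X (n : ℕ) :
    gaussPartialSum (X : R⟦X⟧) n =
      rescale (-1) (1 + 2 * ∑ j ∈ range n, (X : R⟦X⟧) ^ (j + 1) ^ 2) := by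
  have hsign (j : ℕ) : (-X : R⟦X⟧) ^ (j + 1) ^ 2 = (-1) ^ (j + 1) * X ^ (j + 1) ^ 2 := by
    rw [neg_pow, sq (j + 1), pow_mul, ← sq]
    rcases Nat.even_or_odd (j + 1) with h | h <;> simp [h.neg_one_pow]
  simp [gaussPartialSum, mul_sum, mul_assoc, hsign, map_ofNat (rescale (-1 : R))]

theorem coeff_gaussPartialSum_X {d n : ℕ} (hd : d ≤ n) :
    coeff d (gaussPartialSum (X : R⟦X⟧) n) = coeff d (ramanujanPhiNeg R) := by
  rw [gaussPartialSum_X, ramanujanPhiNeg, ramanujanPhi, coeff_rescale, coeff_rescale, map_add,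
    map_add, two_mul, two_mul, map_add, map_add, coeff_sum_X_pow_sq R hd]

theorem ramanujanPhiNeg_mul_prodOneAdd_one [TopologicalSpace R] [T2Space R] [IsTopologicalRing R] :
    ramanujanPhiNeg R * prodOneAdd 1 = prodOneAdd (-1) := by
  have htheta : Tendsto (gaussPartialSum (X : R⟦X⟧)) atTop (nhds (ramanujanPhiNeg R)) := by
    rw [PowerSeries.WithPiTopology.tendsto_iff_coeff_tendsto]
    exact fun d ↦ tendsto_atTop_of_eventually_const (i₀ := d) fun n hn ↦
      coeff_gaussPartialSum_X R hn
  have herror := (htheta.mul (hasProd_prodOneAdd 1).tendsto_prod_nat).sub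
    (hasProd_prodOneAdd (-1)).tendsto_prod_nat
  refine sub_eq_zero.mp (tendsto_nhds_unique herror ?_)
  rw [PowerSeries.WithPiTopology.tendsto_iff_coeff_tendsto]
  refine fun d ↦ tendsto_atTop_of_eventually_const (i₀ := d) fun n hn ↦ ?_
  simp only [Pi.one_apply, Pi.neg_apply, map_neg, ← X_pow_eq, ← sub_eq_add_neg, map_zero]
  exact X_pow_dvd_iff.mp (pow_dvd_gaussPartialSum_mul_prod_sub X n) d (Nat.lt_succ_of_le hn)

theorem expand_ramanujanPhiNeg_mul_prodOneAdd [TopologicalSpace R] [T2Space R]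
    [IsTopologicalRing R] (m : ℕ) (hm : m ≠ 0) :
    expand m hm (ramanujanPhiNeg R) * prodOneAdd ({n | m ∣ n}.indicator 1) =
      prodOneAdd ({n | m ∣ n}.indicator (-1)) := by
  rw [← expand_prodOneAdd m hm, ← expand_prodOneAdd m hm, ← map_mul]
  exact congrArg (expand m hm) (ramanujanPhiNeg_mul_prodOneAdd_one R)

theorem isUnit_ramanujanPhiNeg : IsUnit (ramanujanPhiNeg R) := by
  rw [isUnit_iff_constantCoeff, ← coeff_zero_eq_constantCoeff_apply, ramanujanPhiNeg,
    coeff_rescale]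
  simp [ramanujanPhi, positiveSquareSeries]

theorem rescale_ramanujanPhiNeg : rescale (-1) (ramanujanPhiNeg R) = ramanujanPhi R := by
  simp [ramanujanPhiNeg, rescale_rescale]

theorem two_dvd_ramanujanPhi_sub_one : 2 ∣ ramanujanPhi R - 1 :=
  ⟨positiveSquareSeries R, add_sub_cancel_left _ _⟩

theorem two_dvd_ramanujanPhiNeg_sub_one : 2 ∣ ramanujanPhiNeg R - 1 := by
  simpa [ramanujanPhiNeg, map_ofNat (rescale (-1 : R))] using
    map_dvd (rescale (-1)) (two_dvd_ramanujanPhi_sub_one R)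

theorem ramanujanPhi_mul_ramanujanPhiNeg :
    ramanujanPhi R * ramanujanPhiNeg R = expand 2 two_ne_zero (ramanujanPhiNeg R) ^ 2 := by
  let _ : TopologicalSpace R := ⊥
  have _ : DiscreteTopology R := ⟨rfl⟩
  have hneg := ramanujanPhiNeg_mul_prodOneAdd_one R
  have hpos := congrArg (rescale (-1)) hneg
  have htwo := expand_ramanujanPhiNeg_mul_prodOneAdd R 2 two_ne_zero
  rw [prodOneAdd_eq_mul_compl {n | 2 ∣ n}, prodOneAdd_eq_mul_compl {n | 2 ∣ n} (-1)] at hneg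
  rw [map_mul, rescale_ramanujanPhiNeg, rescale_neg_one_prodOneAdd, rescale_neg_one_prodOneAdd,
    neg_neg] at hpos
  set evenPos := prodOneAdd ({n | 2 ∣ n}.indicator (1 : ℕ → R))
  set evenNeg := prodOneAdd ({n | 2 ∣ n}.indicator (-1 : ℕ → R))
  set oddPos := prodOneAdd ({n | 2 ∣ n}ᶜ.indicator (1 : ℕ → R))
  set oddNeg := prodOneAdd ({n | 2 ∣ n}ᶜ.indicator (-1 : ℕ → R))
  have hunit : IsUnit (evenPos ^ 2 * oddPos * oddNeg) :=
    (((isUnit_prodOneAdd _).pow 2).mul (isUnit_prodOneAdd _)).mul (isUnit_prodOneAdd _)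
  refine hunit.mul_right_cancel ?_
  linear_combination (ramanujanPhiNeg R * evenPos * oddPos) * hpos + evenNeg * oddPos * hneg -
    (expand 2 two_ne_zero (ramanujanPhiNeg R) * evenPos + evenNeg) * oddPos * oddNeg * htwo

theorem expand_ramanujanPhi_mul_ramanujanPhiNeg (m : ℕ) (hm : m ≠ 0) :
    expand m hm (ramanujanPhi R) * expand m hm (ramanujanPhiNeg R) =
      expand (m * 2) (mul_ne_zero hm two_ne_zero) (ramanujanPhiNeg R) ^ 2 := by
  rw [← map_mul, ramanujanPhi_mul_ramanujanPhiNeg, map_pow, expand_mul m hm 2 two_ne_zero]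

theorem disjoint_compl_setOf_mod_two_mul_ne_setOf_dvd {l : ℕ} (hl : l ≠ 0) :
    Disjoint {i : ℕ | i % (2 * l) ≠ l}ᶜ {i | 2 * l ∣ i} :=
  Set.disjoint_left.mpr fun _ hi hdvd ↦
    hl ((not_not.mp hi).symm.trans (Nat.mod_eq_zero_of_dvd hdvd))

theorem compl_setOf_mod_two_mul_ne_union_setOf_dvd (l : ℕ) :
    {i : ℕ | i % (2 * l) ≠ l}ᶜ ∪ {i | 2 * l ∣ i} = {i | l ∣ i} := by
  ext i
  constructor
  · rintro (hi | hi)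
    · exact (Nat.dvd_mod_iff (dvd_mul_left l 2)).mp (dvd_of_eq (not_not.mp hi).symm)
    · exact (dvd_mul_left l 2).trans hi
  · rintro ⟨m, rfl⟩
    rcases Nat.even_or_odd m with hm | hm
    · exact Or.inr (mul_comm l 2 ▸ mul_dvd_mul_left l hm.two_dvd)
    · refine Or.inl (not_not.mpr ?_)
      rw [mul_comm 2 l, Nat.mul_mod_mul_left, Nat.odd_iff.mp hm, mul_one]

theorem regularOverpartitionSeries_mul_ramanujanPhiNeg (l : ℕ) (hl : l ≠ 0) :
    regularOverpartitionSeries R l (2 * l) * ramanujanPhiNeg R *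
        expand (2 * l) (mul_ne_zero two_ne_zero hl) (ramanujanPhiNeg R) =
      expand l hl (ramanujanPhiNeg R) := by
  let _ : TopologicalSpace R := ⊥
  have _ : DiscreteTopology R := ⟨rfl⟩
  have hseries := regularOverpartitionSeries_mul_prodOneAdd (R := R) l (2 * l)
  have hone := ramanujanPhiNeg_mul_prodOneAdd_one R
  have hsmall := expand_ramanujanPhiNeg_mul_prodOneAdd R l hl
  have hlarge := expand_ramanujanPhiNeg_mul_prodOneAdd R (2 * l) (mul_ne_zero two_ne_zero hl)
  have hdisj := disjoint_compl_setOf_mod_two_mul_ne_setOf_dvd hl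
  rw [prodOneAdd_eq_mul_compl {i | i % (2 * l) ≠ l},
    prodOneAdd_eq_mul_compl {i | i % (2 * l) ≠ l} (-1)] at hone
  rw [← compl_setOf_mod_two_mul_ne_union_setOf_dvd, prodOneAdd_indicator_union hdisj,
    prodOneAdd_indicator_union hdisj] at hsmall
  set series := regularOverpartitionSeries R l (2 * l)
  set phiNeg := ramanujanPhiNeg R
  set regPos := prodOneAdd ({i | i % (2 * l) ≠ l}.indicator (1 : ℕ → R))
  set regNeg := prodOneAdd ({i | i % (2 * l) ≠ l}.indicator (-1 : ℕ → R))
  set irregPos := prodOneAdd ({i | i % (2 * l) ≠ l}ᶜ.indicator (1 : ℕ → R))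
  set dvdPos := prodOneAdd ({i | 2 * l ∣ i}.indicator (1 : ℕ → R))
  set dvdNeg := prodOneAdd ({i | 2 * l ∣ i}.indicator (-1 : ℕ → R))
  have hunit : IsUnit (regNeg * irregPos * dvdPos) :=
    ((isUnit_prodOneAdd _).mul (isUnit_prodOneAdd _)).mul (isUnit_prodOneAdd _)
  refine hunit.mul_right_cancel ?_
  linear_combination
    phiNeg * expand (2 * l) (mul_ne_zero two_ne_zero hl) phiNeg * irregPos * dvdPos * hseries +
      phiNeg * regPos * irregPos * hlarge + dvdNeg * hone - regNeg * hsmall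

theorem regularOverpartitionSeries_four_eight_mul_pow :
    regularOverpartitionSeries R 4 8 * expand 8 (by norm_num) (ramanujanPhiNeg R) ^ 7 =
      ramanujanPhi R * expand 2 two_ne_zero (ramanujanPhi R) ^ 2 *
        expand 4 four_ne_zero (ramanujanPhi R) ^ 3 := by
  set P := regularOverpartitionSeries R 4 8
  set F := ramanujanPhi R
  set N := ramanujanPhiNeg R
  set F2 := expand 2 two_ne_zero F
  set N2 := expand 2 two_ne_zero N
  set F4 := expand 4 four_ne_zero F
  set N4 := expand 4 four_ne_zero N
  set N8 := expand 8 (by norm_num) N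
  have hseries : P * N * N8 = N4 :=
    regularOverpartitionSeries_mul_ramanujanPhiNeg R 4 four_ne_zero
  have hone : F * N = N2 ^ 2 := ramanujanPhi_mul_ramanujanPhiNeg R
  have htwo : F2 * N2 = N4 ^ 2 := expand_ramanujanPhi_mul_ramanujanPhiNeg R 2 two_ne_zero
  have hfour : F4 * N4 = N8 ^ 2 := expand_ramanujanPhi_mul_ramanujanPhiNeg R 4 four_ne_zero
  have hunit : IsUnit N4 := (isUnit_ramanujanPhiNeg R).map (expand 4 four_ne_zero)
  have hcube : P * N4 ^ 3 * N8 = F * F2 ^ 2 := by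
    refine hunit.mul_right_cancel ?_
    calc P * N4 ^ 3 * N8 * N4 = P * N8 * (N4 ^ 2) ^ 2 := by ring
      _ = P * N8 * N2 ^ 2 * F2 ^ 2 := by rw [← htwo]; ring
      _ = P * N * N8 * F * F2 ^ 2 := by rw [← hone]; ring
      _ = F * F2 ^ 2 * N4 := by rw [hseries]; ring
  calc P * N8 ^ 7 = P * N8 * (N8 ^ 2) ^ 3 := by ring
    _ = P * N4 ^ 3 * N8 * F4 ^ 3 := by rw [← hfour]; ring
    _ = F * F2 ^ 2 * F4 ^ 3 := by rw [hcube]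

end Theta

section Dissection

theorem isSquare_four_mul_iff {n : ℕ} : IsSquare (4 * n) ↔ IsSquare n := by
  constructor
  · rintro ⟨r, hr⟩
    obtain ⟨s, rfl⟩ : 2 ∣ r := Nat.prime_two.dvd_of_dvd_pow (n := 2) ⟨2 * n, by rw [sq]; omega⟩
    exact ⟨s, by linarith⟩
  · rintro ⟨r, rfl⟩
    exact ⟨2 * r, by ring⟩

theorem four_dvd_or_mod_eight_eq_one_of_isSquare {n : ℕ} (hn : IsSquare n) :
    4 ∣ n ∨ n % 8 = 1 := by
  obtain ⟨r, rfl⟩ := hn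
  rcases Nat.even_or_odd r with hr | hr
  · exact Or.inl (mul_dvd_mul hr.two_dvd hr.two_dvd)
  · have hdvd := Nat.eight_dvd_sq_sub_one_of_odd hr
    have hpos : 0 < r ^ 2 := pow_pos hr.pos 2
    rw [← sq]
    omega

variable (R : Type*) [CommRing R]

theorem positiveSquareSeries_eq_expand_add :
    positiveSquareSeries R = expand 4 four_ne_zero (positiveSquareSeries R) +
      X * expand 8 (by norm_num) (ramanujanPsi R) := by
  ext n
  cases n with
  | zero => simp [positiveSquareSeries]
  | succ n =>
    rw [map_add, coeff_succ_X_mul, coeff_expand, coeff_expand]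
    simp only [positiveSquareSeries, ramanujanPsi, coeff_mk, ne_eq, Nat.succ_ne_zero,
      not_false_eq_true, true_and]
    by_cases hfour : 4 ∣ n + 1
    · have height : ¬ 8 ∣ n := by omega
      obtain ⟨m, hm⟩ := hfour
      have hm0 : m ≠ 0 := by omega
      simp [hm, height, hm0, isSquare_four_mul_iff]
    · by_cases height : 8 ∣ n
      · obtain ⟨m, rfl⟩ := height
        simp [hfour]
      · have hsq : ¬ IsSquare (n + 1) := fun h ↦ by
          have := four_dvd_or_mod_eight_eq_one_of_isSquare h
          omega
        simp [hfour, height, hsq]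

theorem ramanujanPhi_eq_expand_add :
    ramanujanPhi R = expand 4 four_ne_zero (ramanujanPhi R) +
      2 * X * expand 8 (by norm_num) (ramanujanPsi R) := by
  have h := positiveSquareSeries_eq_expand_add R
  simp only [ramanujanPhi, map_add, map_one, map_mul, map_ofNat]
  linear_combination 2 * h

theorem expand_two_ramanujanPhi_eq_expand_add :
    expand 2 two_ne_zero (ramanujanPhi R) = expand 8 (by norm_num) (ramanujanPhi R) +
      2 * X ^ 2 * expand 16 (by norm_num) (ramanujanPsi R) := by
  have h := congrArg (expand 2 two_ne_zero) (ramanujanPhi_eq_expand_add R)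
  simpa only [map_add, map_mul, map_ofNat, expand_X, ← expand_mul, Nat.reduceMul] using h

end Dissection

section Mod32

theorem two_pow_mul_pow_two_pow_eq {A : Type*} [CommRing A] {j k : ℕ}
    (htwo : (2 : A) ^ (j + (k + 1)) = 0) {a : A} (ha : 2 ∣ a - 1) :
    2 ^ j * a ^ 2 ^ k = 2 ^ j := by
  obtain ⟨b, hb⟩ := dvd_sub_pow_of_dvd_sub (p := 2) (mod_cast ha) k
  rw [one_pow, Nat.cast_ofNat] at hb
  rw [pow_add] at htwo
  linear_combination 2 ^ j * hb + b * htwo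

theorem two_pow_five_eq_zero : (2 : (ZMod 32)⟦X⟧) ^ 5 = 0 := by
  have h : (2 : ZMod 32) ^ 5 = 0 := by decide
  rw [← map_ofNat (C (R := ZMod 32)), ← map_pow, h, map_zero]

theorem ramanujanPhiNeg_zmod_pow_sixteen : ramanujanPhiNeg (ZMod 32) ^ 16 = 1 := by
  simpa using two_pow_mul_pow_two_pow_eq (j := 0) (k := 4) two_pow_five_eq_zero
    (two_dvd_ramanujanPhiNeg_sub_one _)

theorem four_mul_zmod_pow_four {a : (ZMod 32)⟦X⟧} (ha : 2 ∣ a - 1) : 4 * a ^ 4 = 4 := by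
  have h := two_pow_mul_pow_two_pow_eq (j := 2) (k := 2) two_pow_five_eq_zero ha
  norm_num at h
  exact h

theorem exists_regularOverpartitionSeries_zmod_eq :
    ∃ A B : (ZMod 32)⟦X⟧, regularOverpartitionSeries (ZMod 32) 4 8 =
      expand 4 four_ne_zero A + X * expand 2 two_ne_zero B +
        X ^ 2 * expand 16 (by norm_num)
          (4 * ramanujanPsi (ZMod 32) * ramanujanPhiNeg (ZMod 32) ^ 2) := by
  have hproduct := regularOverpartitionSeries_four_eight_mul_pow (ZMod 32)
  have hdissect := ramanujanPhi_eq_expand_add (ZMod 32)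
  have hdissect_two := expand_two_ramanujanPhi_eq_expand_add (ZMod 32)
  have hmul := expand_ramanujanPhi_mul_ramanujanPhiNeg (ZMod 32) 8 (by norm_num)
  have hphi := congrArg (expand 4 four_ne_zero)
    (four_mul_zmod_pow_four (two_dvd_ramanujanPhi_sub_one _))
  have hneg := congrArg (expand 8 (by norm_num))
    (four_mul_zmod_pow_four (two_dvd_ramanujanPhiNeg_sub_one _))
  have hneg_pow := congrArg (expand 8 (by norm_num)) ramanujanPhiNeg_zmod_pow_sixteen
  set F := ramanujanPhi (ZMod 32)
  set N := ramanujanPhiNeg (ZMod 32)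
  set ψ := ramanujanPsi (ZMod 32)
  refine ⟨F ^ 4 * (expand 2 two_ne_zero F ^ 2 + 4 * X * expand 4 four_ne_zero ψ ^ 2) *
      expand 2 two_ne_zero N ^ 9,
    2 * expand 4 four_ne_zero ψ * F ^ 2 * expand 2 two_ne_zero F ^ 3 *
      expand 4 four_ne_zero N ^ 9, ?_⟩
  simp only [map_add, map_mul, map_pow, map_ofNat, map_one, expand_X, ← expand_mul,
    Nat.reduceMul] at hphi hneg hneg_pow hmul ⊢
  set P := regularOverpartitionSeries (ZMod 32) 4 8
  set F2 := expand 2 two_ne_zero F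
  set F4 := expand 4 four_ne_zero F
  set F8 := expand 8 (by norm_num) F
  set N8 := expand 8 (by norm_num) N
  set ψ16 := expand 16 (by norm_num) ψ
  linear_combination -P * hneg_pow + N8 ^ 9 * hproduct + F2 ^ 2 * F4 ^ 3 * N8 ^ 9 * hdissect +
    F4 ^ 4 * N8 ^ 9 * (F2 + F8 + 2 * X ^ 2 * ψ16) * hdissect_two +
    X ^ 2 * ψ16 * (F8 * N8 ^ 9 * hphi + (N8 ^ 4 + 1) * F8 * N8 * hneg + 4 * hmul)

theorem coeff_regularOverpartitionSeries_zmod_eq_zero {m : ℕ} (hm4 : m % 4 = 2)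
    (hm16 : m % 16 ≠ 2) : coeff m (regularOverpartitionSeries (ZMod 32) 4 8) = 0 := by
  obtain ⟨A, B, hseries⟩ := exists_regularOverpartitionSeries_zmod_eq
  obtain ⟨u, rfl⟩ : ∃ u, m = u + 2 := ⟨m - 2, by omega⟩
  rw [hseries, map_add, map_add, coeff_X_pow_mul, coeff_succ_X_mul,
    coeff_expand_of_not_dvd 4 _ _ (by omega), coeff_expand_of_not_dvd 2 _ _ (by omega),
    coeff_expand_of_not_dvd 16 _ _ (by omega), add_zero, add_zero]

end Mod32

theorem stmt_2 (n : ℕ) (t : ℕ) (ht : t ∈ ({6, 10, 14} : Finset ℕ)) :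
    32 ∣ regularOverpartitions 4 8 (16 * n + t) := by
  have ht' : t = 6 ∨ t = 10 ∨ t = 14 := by simpa using ht
  have hcoeff := coeff_regularOverpartitionSeries_zmod_eq_zero (m := 16 * n + t)
    (by omega) (by omega)
  rwa [regularOverpartitionSeries, coeff_mk, ZMod.natCast_eq_zero_iff] at hcoeff
end
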